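/- arXiv:1808.06182 — 2 statements merged into one kernel-verified Lean document; each statement's English description precedes it below -/
import Mathlib

section
/- There exists a constant C > 0 such that for all sufficiently large n, the number S(n) of multiplicative Sidon subsets of [n] satisfies S(n) ≤ T(n) · 2^{C·n^{3/4}/(log n)^{3/2}}, where log denotes the natural logarithm. -/
open scoped Classical

/-- A finite set of naturals is multiplicative Sidon if it contains no four
distinct elements `a₁, a₂, b₁, b₂` with `a₁ * a₂ = b₁ * b₂`. -/
def MulSidon (A : Finset ℕ) : Prop :=
  ¬ ∃ a₁ a₂ b₁ b₂, a₁ ∈ A ∧ a₂ ∈ A ∧ b₁ ∈ A ∧ b₂ ∈ A ∧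
    a₁ ≠ a₂ ∧ a₁ ≠ b₁ ∧ a₁ ≠ b₂ ∧ a₂ ≠ b₁ ∧ a₂ ≠ b₂ ∧ b₁ ≠ b₂ ∧
    a₁ * a₂ = b₁ * b₂

/-- `S n`: the number of multiplicative Sidon subsets of `{1, …, n}`. -/
noncomputable def S (n : ℕ) : ℕ :=
  ((Finset.Icc 1 n).powerset.filter (fun A => MulSidon A)).card

/-- `T n = ∏_{p prime, n^{2/3} < p ≤ n} (⌊n/p⌋ + 1)`. -/
noncomputable def T (n : ℕ) : ℕ :=
  ∏ p ∈ (Finset.Icc 1 n).filter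
      (fun p => Nat.Prime p ∧ (n : ℝ) ^ ((2 : ℝ)/3) < (p : ℝ)),
    (n / p + 1)


noncomputable def indepSets {α β : Type*} (nb : α → Finset β) (W : Finset α) (d : ℕ) :
    Finset (Finset α) :=
  W.powerset.filter (fun I => (∀ p ∈ I, ∀ p' ∈ I, p ≠ p' → Disjoint (nb p) (nb p')) ∧ I.card ≤ d)

lemma subsets_count {α : Type*} (W : Finset α) (d : ℕ) (t R : ℝ) (ht : 0 < t) (ht1 : t ≤ 1)
    (hW : (W.card : ℝ) ≤ R) :
    ((W.powerset.filter (fun I => I.card ≤ d)).card : ℝ) ≤ t⁻¹ ^ d * Real.exp (t * R) := by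
  have h1 : ((W.powerset.filter (fun I => I.card ≤ d)).card : ℝ)
      ≤ ∑ I ∈ W.powerset, t⁻¹ ^ d * (t ^ I.card * 1 ^ (W.card - I.card)) := by
    rw [Finset.card_filter]
    push_cast
    apply Finset.sum_le_sum
    intro I hI
    split_ifs with h
    · rw [one_pow, mul_one, inv_pow, ← div_eq_inv_mul, one_le_div (by positivity)]
      exact pow_le_pow_of_le_one ht.le ht1 h
    · positivity
  rw [← Finset.mul_sum, Finset.sum_pow_mul_eq_add_pow] at h1
  refine h1.trans ?_
  gcongr
  calc (t + 1) ^ W.card ≤ (Real.exp t) ^ W.card := by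
        gcongr; exact Real.add_one_le_exp t
    _ = Real.exp (W.card * t) := by rw [Real.exp_nat_mul]
    _ ≤ _ := by
        apply Real.exp_le_exp.mpr
        nlinarith

lemma indep_count {α β : Type*} (nb : α → Finset β) (P : Finset α) (b R t : ℝ) (d : ℕ)
    (ht : 0 < t) (ht1 : t ≤ 1)
    (h : ∀ W ⊆ P, R < (W.card : ℝ) → ∃ x ∈ W, b * W.card ≤
      ((W.filter (fun p => p ≠ x ∧ ¬ Disjoint (nb p) (nb x))).card : ℝ)) :
    ∀ m : ℕ, ∀ W ⊆ P, W.card = m → ∀ k : ℕ, (W.card : ℝ) * Real.exp (-(b * k)) ≤ R →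
      ((indepSets nb W d).card : ℝ) ≤ ((W.card : ℝ) + 1) ^ k * (t⁻¹ ^ d * Real.exp (t * R)) := by
  intro m
  induction m using Nat.strong_induction_on with
  | _ m ih =>
  intro W hWP hWm k hk
  have hBpos : 0 < t⁻¹ ^ d * Real.exp (t * R) := by positivity
  by_cases hR : (W.card : ℝ) ≤ R
  · calc ((indepSets nb W d).card : ℝ) ≤ ((W.powerset.filter (fun I => I.card ≤ d)).card : ℝ) := by
          norm_cast
          apply Finset.card_le_card
          intro I hI
          simp only [indepSets, Finset.mem_filter] at hI ⊢
          exact ⟨hI.1, hI.2.2⟩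
      _ ≤ t⁻¹ ^ d * Real.exp (t * R) := subsets_count W d t R ht ht1 hR
      _ ≤ _ := by
          apply le_mul_of_one_le_left hBpos.le
          apply one_le_pow₀
          have : (0:ℝ) ≤ W.card := by positivity
          linarith
  · push Not at hR
    obtain ⟨x, hxW, hx⟩ := h W hWP hR
    rcases k with _ | k
    · simp at hk; linarith
    set N := W.filter (fun p => p ≠ x ∧ ¬ Disjoint (nb p) (nb x)) with hN
    set W1 := W.erase x with hW1
    set W2 := W1 \ N with hW2
    have hWpos : 0 < W.card := Finset.card_pos.mpr ⟨x, hxW⟩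
    have hc1 : W1.card = W.card - 1 := Finset.card_erase_of_mem hxW
    have hNW : N ⊆ W1 := by
      intro p hp
      simp only [hN, Finset.mem_filter] at hp
      simp [hW1, hp.1, hp.2.1]
    have hc2 : W2.card + N.card = W1.card := Finset.card_sdiff_add_card_eq_card hNW
    have hc1r : (W1.card : ℝ) + 1 = W.card := by
      rw [hc1]; push_cast [Nat.cast_sub hWpos]; ring
    have hc2r : (W2.card : ℝ) + N.card = W1.card := by exact_mod_cast hc2
    have i1 := ih W1.card (by omega) W1 ((Finset.erase_subset _ _).trans hWP) rfl (k+1) (by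
      refine le_trans (mul_le_mul_of_nonneg_right ?_ (Real.exp_pos _).le) hk
      linarith)
    have i2 := ih W2.card (by omega) W2 (Finset.sdiff_subset.trans ((Finset.erase_subset _ _).trans hWP)) rfl k (by
      refine le_trans ?_ hk
      have e1 : Real.exp (-(b * ((k+1 : ℕ) : ℝ))) = Real.exp (-b) * Real.exp (-(b * k)) := by
        rw [← Real.exp_add]; congr 1; push_cast; ring
      rw [e1, ← mul_assoc]
      gcongr
      have := Real.add_one_le_exp (-b)
      have hw : (0:ℝ) ≤ W.card := by positivity
      nlinarith)
    have hsplit : (indepSets nb W d).card ≤ (indepSets nb W1 d).card + (indepSets nb W2 d).card := by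
      have e : indepSets nb W d ⊆ indepSets nb W1 d ∪ (indepSets nb W2 d).image (insert x) := by
        intro I hI
        simp only [indepSets, Finset.mem_filter, Finset.mem_powerset, Finset.mem_union, Finset.mem_image] at hI ⊢
        obtain ⟨hIW, hind, hcard⟩ := hI
        by_cases hxI : x ∈ I
        · right
          refine ⟨I.erase x, ⟨?_, ?_, ?_⟩, Finset.insert_erase hxI⟩
          · intro p hp
            have hp' := Finset.mem_erase.mp hp
            simp only [hW2, hW1, hN, Finset.mem_sdiff, Finset.mem_erase, Finset.mem_filter]
            refine ⟨⟨hp'.1, hIW hp'.2⟩, ?_⟩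
            rintro ⟨_, _, h3⟩
            exact h3 (hind p hp'.2 x hxI hp'.1)
          · intro p hp q hq
            exact hind p (Finset.mem_of_mem_erase hp) q (Finset.mem_of_mem_erase hq)
          · exact (Finset.card_le_card (Finset.erase_subset _ _)).trans hcard
        · left
          refine ⟨?_, hind, hcard⟩
          intro p hp
          simp only [hW1, Finset.mem_erase]
          exact ⟨fun hh => hxI (hh ▸ hp), hIW hp⟩
      exact (Finset.card_le_card e).trans ((Finset.card_union_le _ _).trans
        (Nat.add_le_add_left Finset.card_image_le _))
    have hsr : ((indepSets nb W d).card : ℝ) ≤ (indepSets nb W1 d).card + (indepSets nb W2 d).card := by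
      exact_mod_cast hsplit
    set B := t⁻¹ ^ d * Real.exp (t * R)
    have hw1 : (1:ℝ) ≤ W.card := by exact_mod_cast hWpos
    have i2' : ((indepSets nb W2 d).card : ℝ) ≤ ((W.card : ℝ)) ^ k * B := by
      refine i2.trans ?_
      gcongr
      have : (0:ℝ) ≤ N.card := by positivity
      linarith
    rw [hc1r] at i1
    calc ((indepSets nb W d).card : ℝ) ≤ (W.card : ℝ)^(k+1) * B + (W.card : ℝ) ^ k * B := by linarith
      _ = (W.card : ℝ)^k * (W.card + 1) * B := by ring
      _ ≤ (W.card + 1 : ℝ)^k * (W.card + 1) * B := by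
          gcongr
          linarith
      _ = _ := by ring

lemma ext_count {α β : Type*} (nb : α → Finset β) (P : Finset α) (Q : Finset β) (q δ t : ℝ) (d k : ℕ)
    (ht : 0 < t) (ht1 : t ≤ 1) (hq : (Q.card : ℝ) ≤ q) (hq0 : 0 < q) (hδ : 0 < δ)
    (hsub : ∀ p ∈ P, nb p ⊆ Q) (hdeg : ∀ p ∈ P, δ ≤ ((nb p).card : ℝ))
    (hC4 : ∀ p ∈ P, ∀ p' ∈ P, p ≠ p' → (nb p ∩ nb p').card ≤ 1)
    (hk : (P.card : ℝ) * Real.exp (-(δ^2 / (2*q) * k)) ≤ 2 * q / δ) :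
    ((indepSets nb P d).card : ℝ) ≤ ((P.card : ℝ) + 1) ^ k * (t⁻¹ ^ d * Real.exp (t * (2 * q / δ))) := by
  refine indep_count nb P (δ^2/(2*q)) (2*q/δ) t d ht ht1 ?_ P.card P (le_refl _) rfl k hk
  intro W hWP hR
  by_contra hcon
  push Not at hcon
  set w : β → ℝ := fun v => ((W.filter (fun p => v ∈ nb p)).card : ℝ) with hw
  have hWpos : (0:ℝ) < W.card := lt_trans (by positivity) hR
  have hne : W.Nonempty := Finset.card_pos.mp (by exact_mod_cast hWpos)
  set Sm : ℝ := ∑ p ∈ W, ((nb p).card : ℝ) with hSm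
  have hS1 : ∑ v ∈ Q, w v = Sm := by
    simp only [hw, hSm, Finset.card_filter]
    push_cast
    rw [Finset.sum_comm]
    apply Finset.sum_congr rfl
    intro p hp
    rw [Finset.sum_ite, Finset.sum_const_zero, add_zero, Finset.sum_const, nsmul_eq_mul, mul_one]
    norm_cast
    congr 1
    ext v
    simp only [Finset.mem_filter]
    exact ⟨fun h => h.2, fun h => ⟨hsub p (hWP hp) h, h⟩⟩
  have hS2 : ∑ v ∈ Q, w v ^ 2 = ∑ x ∈ W, ∑ p ∈ W, ((nb p ∩ nb x).card : ℝ) := by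
    have : ∀ v ∈ Q, w v ^ 2 = ∑ x ∈ W, ∑ p ∈ W, (if v ∈ nb x then (1:ℝ) else 0) * (if v ∈ nb p then 1 else 0) := by
      intro v _
      rw [← Finset.sum_mul_sum, sq]
      simp only [hw, Finset.card_filter]
      push_cast
      rfl
    rw [Finset.sum_congr rfl this, Finset.sum_comm]
    apply Finset.sum_congr rfl
    intro x hx
    rw [Finset.sum_comm]
    apply Finset.sum_congr rfl
    intro p hp
    have : ∀ v ∈ Q, (if v ∈ nb x then (1:ℝ) else 0) * (if v ∈ nb p then 1 else 0) = if v ∈ nb p ∩ nb x then 1 else 0 := by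
      intro v _
      simp only [Finset.mem_inter]
      split_ifs <;> simp_all
    rw [Finset.sum_congr rfl this, Finset.sum_ite, Finset.sum_const_zero, add_zero, Finset.sum_const, nsmul_eq_mul, mul_one]
    norm_cast
    congr 1
    ext v
    simp only [Finset.mem_filter]
    exact ⟨fun h => h.2, fun h => ⟨hsub p (hWP hp) (Finset.mem_inter.mp h).1, h⟩⟩
  have hS3 : ∀ x ∈ W, ∑ p ∈ W, ((nb p ∩ nb x).card : ℝ) ≤ (nb x).card +
      ((W.filter (fun p => p ≠ x ∧ ¬ Disjoint (nb p) (nb x))).card : ℝ) := by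
    intro x hx
    rw [← Finset.add_sum_erase W _ hx, Finset.inter_self]
    gcongr
    have e : W.filter (fun p => p ≠ x ∧ ¬ Disjoint (nb p) (nb x)) = (W.erase x).filter (fun p => ¬ Disjoint (nb p) (nb x)) := by
      ext p; simp only [Finset.mem_filter, Finset.mem_erase]; tauto
    rw [e, Finset.card_filter]
    push_cast
    apply Finset.sum_le_sum
    intro p hp
    have hp' := Finset.mem_erase.mp hp
    have := hC4 p (hWP hp'.2) x (hWP hx) hp'.1
    by_cases hd : Disjoint (nb p) (nb x)
    · rw [Finset.disjoint_iff_inter_eq_empty.mp hd]; simp [hd]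
    · rw [if_pos hd]; exact_mod_cast this
  have hS4 : ∑ v ∈ Q, w v ^ 2 < Sm + δ^2/(2*q) * W.card * W.card := by
    rw [hS2]
    calc _ < ∑ x ∈ W, (((nb x).card : ℝ) + δ^2/(2*q) * W.card) := by
          apply Finset.sum_lt_sum_of_nonempty hne
          intro x hx
          exact lt_of_le_of_lt (hS3 x hx) (by have := hcon x hx; linarith)
      _ = _ := by
          rw [Finset.sum_add_distrib, Finset.sum_const, nsmul_eq_mul]; ring
  have hCS : Sm ^ 2 ≤ q * ∑ v ∈ Q, w v ^ 2 := by
    rw [← hS1]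
    exact sq_sum_le_card_mul_sum_sq.trans
      (mul_le_mul_of_nonneg_right hq (Finset.sum_nonneg fun v _ => sq_nonneg _))
  have hSδ : δ * W.card ≤ Sm := by
    rw [hSm]
    calc δ * W.card = ∑ p ∈ W, δ := by rw [Finset.sum_const, nsmul_eq_mul]; ring
      _ ≤ _ := Finset.sum_le_sum (fun p hp => hdeg p (hWP hp))
  have hR' : 2 * q < δ * W.card := by
    rw [div_lt_iff₀ hδ] at hR; linarith
  have h5 : q * (δ^2/(2*q) * W.card * W.card) = (δ * W.card)^2/2 := by field_simp
  have h6 : Sm^2 < q * Sm + (δ * W.card)^2/2 := by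
    calc Sm^2 ≤ _ := hCS
      _ < q * (Sm + δ^2/(2*q) * W.card * W.card) := mul_lt_mul_of_pos_left hS4 hq0
      _ = _ := by rw [mul_add, h5]
  have : 0 < δ * W.card := by positivity
  nlinarith


lemma indep_trivial {α β : Type*} (nb : α → Finset β) (P : Finset α) (d : ℕ) (L : ℝ)
    (hP : Real.log ((P.card : ℝ) + 1) ≤ L) :
    ((indepSets nb P d).card : ℝ) ≤ Real.exp (L * d + 1) := by
  have hp : (0:ℝ) < (P.card : ℝ) + 1 := by positivity
  have h0 : ((indepSets nb P d).card : ℝ) ≤ ((P.powerset.filter (fun I => I.card ≤ d)).card : ℝ) := by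
    norm_cast
    apply Finset.card_le_card
    intro I hI
    simp only [indepSets, Finset.mem_filter] at hI ⊢
    exact ⟨hI.1, hI.2.2⟩
  have h1 := subsets_count P d (1/((P.card : ℝ) + 1)) P.card (by positivity) (by
    rw [div_le_one hp]; linarith [(by positivity : (0:ℝ) ≤ P.card)]) le_rfl
  refine h0.trans (h1.trans ?_)
  rw [Real.exp_add]
  have e1 : (1 / ((P.card : ℝ) + 1))⁻¹ ^ d = Real.exp (Real.log ((P.card : ℝ) + 1) * d) := by
    rw [mul_comm, Real.exp_nat_mul, Real.exp_log hp]; simp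
  rw [e1]
  gcongr
  rw [one_div, inv_mul_le_iff₀ hp]; linarith

lemma pow_le_exp_of_log {p L : ℝ} (hp : 0 < p) (h : Real.log p ≤ L) (k : ℕ) (K : ℝ) (hk : (k:ℝ) ≤ K)
    (hL : 0 ≤ L) : p ^ k ≤ Real.exp (L * K) := by
  rw [← Real.exp_log (pow_pos hp k), Real.log_pow]
  apply Real.exp_le_exp.mpr
  have : (0:ℝ) ≤ k := by positivity
  nlinarith

lemma x_log_inv {x : ℝ} (hx : 0 < x) : x * Real.log (1/x) ≤ 1 - x := by
  have := Real.log_le_sub_one_of_pos (show 0 < 1/x by positivity)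
  calc x * Real.log (1/x) ≤ x * (1/x - 1) := by gcongr
    _ = 1 - x := by field_simp

set_option maxHeartbeats 1000000 in
lemma extV {α β : Type*} (nb : α → Finset β) (P : Finset α) (Q : Finset β) (s r L : ℝ) (d : ℕ)
    (hr : 0 < r) (hrs : r ≤ s) (hL : 2 ≤ L) (hrL : 2 * L ≤ r) (hlog : Real.log (s^2 + 1) ≤ L)
    (hP : (P.card : ℝ) ≤ s^2) (hQ : (Q.card : ℝ) ≤ r * s)
    (hsub : ∀ p ∈ P, nb p ⊆ Q)
    (hC4 : ∀ p ∈ P, ∀ p' ∈ P, p ≠ p' → (nb p ∩ nb p').card ≤ 1)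
    (hdeg : ∀ p ∈ P, r * min (d / s) 1 - 1 ≤ ((nb p).card : ℝ)) :
    ((indepSets nb P d).card : ℝ) ≤ Real.exp (6 * s + 9 * (s / r) * L ^ 4) := by
  have hs : 0 < s := by linarith
  have hp1 : (0:ℝ) < (P.card : ℝ) + 1 := by positivity
  have hPL : Real.log ((P.card : ℝ) + 1) ≤ L := by
    refine le_trans (Real.log_le_log hp1 ?_) hlog
    linarith
  set x := min (d / s) 1 with hx
  have hsr : 1 ≤ s / r := by rw [one_le_div hr]; exact hrs
  have hsr0 : 0 ≤ 9 * (s / r) * L ^ 4 := by positivity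
  by_cases hxL : x ≤ 1 / L
  · refine (indep_trivial nb P d L hPL).trans ?_
    apply Real.exp_le_exp.mpr
    have : (d / s : ℝ) ≤ 1 / L := by
      rcases min_le_iff.mp hxL with h | h
      · exact h
      · rw [le_div_iff₀ (by linarith)] at h; linarith
    rw [div_le_div_iff₀ hs (by linarith)] at this
    linarith
  · push Not at hxL
    have hx0 : 0 < x := lt_trans (by positivity) hxL
    have hx1 : x ≤ 1 := min_le_right _ _
    have hxL' : 1 < x * L := by rwa [div_lt_iff₀ (by linarith)] at hxL
    have hrx : 2 ≤ r * x := by nlinarith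
    set k := ⌈8 * (s / r) * L / x^2⌉₊ with hkdef
    have hk1 : 8 * (s / r) * L / x^2 ≤ k := Nat.le_ceil _
    have hk2 : (k : ℝ) ≤ 9 * (s / r) * L ^ 3 := by
      have : (k:ℝ) < 8 * (s / r) * L / x^2 + 1 := Nat.ceil_lt_add_one (by positivity)
      have h2 : 8 * (s / r) * L / x^2 ≤ 8 * (s/r) * L ^ 3 := by
        rw [div_le_iff₀ (by positivity)]
        have : 1 ≤ x^2 * L^2 := by nlinarith
        calc 8 * (s / r) * L = 8 * (s / r) * L * 1 := by ring
          _ ≤ 8 * (s / r) * L * (x^2 * L^2) := by gcongr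
          _ = _ := by ring
      have h3 : 1 ≤ (s/r) * L^3 := by
        have : 1 ≤ L^3 := one_le_pow₀ (by linarith)
        nlinarith
      linarith
    have hR : 2 * (r * s) / (r * x / 2) = 4 * s / x := by field_simp; ring
    have hmain := ext_count nb P Q (r * s) (r * x / 2) (x^2) d k (by positivity) (by nlinarith) hQ
      (by positivity) (by positivity) hsub (by
        intro p hp
        have := hdeg p hp
        linarith) hC4 (by
        rw [hR]
        have e : (r * x / 2)^2 / (2 * (r * s)) * k ≥ L := by
          calc (r * x / 2)^2 / (2 * (r * s)) * k ≥ (r * x / 2)^2 / (2 * (r * s)) * (8 * (s / r) * L / x^2) := by gcongr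
            _ = L := by field_simp; ring
        calc (P.card : ℝ) * Real.exp (-((r * x / 2)^2 / (2 * (r * s)) * k)) ≤ Real.exp L * Real.exp (-L) := by
              gcongr
              have := (Real.log_le_iff_le_exp hp1).mp hPL
              linarith
            _ = 1 := by rw [← Real.exp_add]; simp
            _ ≤ 4 * s / x := by
              rw [le_div_iff₀ hx0]; nlinarith)
    refine hmain.trans ?_
    rw [hR]
    have e1 := pow_le_exp_of_log hp1 hPL k _ hk2 (by linarith)
    have e2 : (x^2)⁻¹ ^ d ≤ Real.exp (2 * s) := by
      rw [← Real.exp_log (show 0 < (x^2)⁻¹ ^ d by positivity)]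
      apply Real.exp_le_exp.mpr
      rw [Real.log_pow, Real.log_inv, Real.log_pow]
      rcases min_choice (d/s : ℝ) 1 with h | h
      · have hd : (d : ℝ) = s * x := by rw [hx, h]; field_simp
        have := x_log_inv hx0
        rw [one_div, Real.log_inv] at this
        rw [hd]
        push_cast
        nlinarith
      · rw [hx, h]; simp; exact hs.le
    have e3 : Real.exp (x^2 * (4 * s / x)) ≤ Real.exp (4 * s) := by
      apply Real.exp_le_exp.mpr
      have : x^2 * (4 * s / x) = 4 * s * x := by field_simp
      rw [this]; nlinarith
    calc _ ≤ Real.exp (L * (9 * (s/r) * L^3)) * (Real.exp (2*s) * Real.exp (4 * s)) := by gcongr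
      _ = _ := by rw [← Real.exp_add, ← Real.exp_add]; congr 1; ring

set_option maxHeartbeats 1000000 in
lemma extU {α β : Type*} (nb : α → Finset β) (P : Finset α) (Q : Finset β) (s r L : ℝ) (d : ℕ)
    (hr : 0 < r) (hrs : r ≤ s) (hL : 2 ≤ L) (hrL : 2 * L ≤ r) (hlog : Real.log (s^2 + 1) ≤ L)
    (hP : (P.card : ℝ) ≤ r * s) (hQ : (Q.card : ℝ) ≤ s ^ 2)
    (hsub : ∀ p ∈ P, nb p ⊆ Q)
    (hC4 : ∀ p ∈ P, ∀ p' ∈ P, p ≠ p' → (nb p ∩ nb p').card ≤ 1)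
    (hd : (d : ℝ) < r)
    (hdeg : ∀ p ∈ P, s * (d / r) - 1 ≤ ((nb p).card : ℝ)) :
    ((indepSets nb P d).card : ℝ) ≤ Real.exp (r * (6 + Real.log (s / r)) + 9 * L ^ 4) := by
  have hs : 0 < s := by linarith
  have hp1 : (0:ℝ) < (P.card : ℝ) + 1 := by positivity
  have hPL : Real.log ((P.card : ℝ) + 1) ≤ L := by
    refine le_trans (Real.log_le_log hp1 ?_) hlog
    nlinarith
  set x : ℝ := d / r with hx
  have hdx : (d : ℝ) = r * x := by rw [hx]; field_simp
  have hsr : 1 ≤ s / r := by rw [one_le_div hr]; exact hrs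
  have hlsr : 0 ≤ Real.log (s / r) := Real.log_nonneg hsr
  have hL40 : 0 ≤ 9 * L ^ 4 := by positivity
  have hrlog : 0 ≤ r * Real.log (s / r) := by positivity
  by_cases hxL : x ≤ 1 / L
  · refine (indep_trivial nb P d L hPL).trans ?_
    apply Real.exp_le_exp.mpr
    have := hxL
    rw [hx, div_le_div_iff₀ hr (by linarith)] at this
    linarith
  · push Not at hxL
    have hx0 : 0 < x := lt_trans (by positivity) hxL
    have hx1 : x ≤ 1 := by rw [hx, div_le_one hr]; exact hd.le
    have hxL' : 1 < x * L := by rwa [div_lt_iff₀ (by linarith)] at hxL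
    have hrx : 2 ≤ s * x := by nlinarith
    set k := ⌈8 * L / x^2⌉₊ with hkdef
    have hk1 : 8 * L / x^2 ≤ k := Nat.le_ceil _
    have hk2 : (k : ℝ) ≤ 9 * L ^ 3 := by
      have : (k:ℝ) < 8 * L / x^2 + 1 := Nat.ceil_lt_add_one (by positivity)
      have h2 : 8 * L / x^2 ≤ 8 * L ^ 3 := by
        rw [div_le_iff₀ (by positivity)]
        have : 1 ≤ x^2 * L^2 := by nlinarith
        calc 8 * L = 8 * L * 1 := by ring
          _ ≤ 8 * L * (x^2 * L^2) := by gcongr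
          _ = _ := by ring
      have h3 : 1 ≤ L^3 := one_le_pow₀ (by linarith)
      linarith
    have hR : 2 * (s ^ 2) / (s * x / 2) = 4 * s / x := by field_simp; ring
    have hrs1 : r / s ≤ 1 := by rw [div_le_one hs]; exact hrs
    have hmain := ext_count nb P Q (s ^ 2) (s * x / 2) (r / s * x^2) d k (by positivity)
      (by
        calc r / s * x^2 ≤ 1 * 1 := by gcongr; nlinarith
          _ = 1 := by ring) hQ
      (by positivity) (by positivity) hsub (by
        intro p hp
        have := hdeg p hp
        linarith) hC4 (by
        rw [hR]
        have e : (s * x / 2)^2 / (2 * (s ^ 2)) * k ≥ L := by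
          calc (s * x / 2)^2 / (2 * (s ^ 2)) * k ≥ (s * x / 2)^2 / (2 * (s ^ 2)) * (8 * L / x^2) := by gcongr
            _ = L := by field_simp; ring
        calc (P.card : ℝ) * Real.exp (-((s * x / 2)^2 / (2 * (s ^ 2)) * k)) ≤ Real.exp L * Real.exp (-L) := by
              gcongr
              have := (Real.log_le_iff_le_exp hp1).mp hPL
              linarith
            _ = 1 := by rw [← Real.exp_add]; simp
            _ ≤ 4 * s / x := by
              rw [le_div_iff₀ hx0]; nlinarith)
    refine hmain.trans ?_
    rw [hR]
    have e1 := pow_le_exp_of_log hp1 hPL k _ hk2 (by linarith)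
    have e2 : (r / s * x^2)⁻¹ ^ d ≤ Real.exp (r * (2 + Real.log (s / r))) := by
      rw [← Real.exp_log (show 0 < (r / s * x^2)⁻¹ ^ d by positivity)]
      apply Real.exp_le_exp.mpr
      rw [Real.log_pow, mul_inv, inv_div, Real.log_mul (by positivity) (by positivity), Real.log_inv, Real.log_pow]
      have := x_log_inv hx0
      rw [one_div, Real.log_inv] at this
      rw [hdx]
      push_cast
      have h1 : x * Real.log (s/r) ≤ Real.log (s / r) := by nlinarith
      have h2 : x * (Real.log (s/r) + -(2 * Real.log x)) ≤ 2 + Real.log (s / r) := by nlinarith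
      calc r * x * (Real.log (s/r) + -(2 * Real.log x)) = r * (x * (Real.log (s/r) + -(2 * Real.log x))) := by ring
        _ ≤ _ := by gcongr
    have e3 : Real.exp (r / s * x^2 * (4 * s / x)) ≤ Real.exp (4 * r) := by
      apply Real.exp_le_exp.mpr
      have : r / s * x^2 * (4 * s / x) = 4 * r * x := by field_simp
      rw [this]; nlinarith
    calc _ ≤ Real.exp (L * (9 * L^3)) * (Real.exp (r * (2 + Real.log (s / r))) * Real.exp (4 * r)) := by gcongr
      _ = _ := by rw [← Real.exp_add, ← Real.exp_add]; congr 1; ring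


def C4F {α β : Type*} (G : Finset (α × β)) : Prop :=
  ∀ u u' v v', (u,v) ∈ G → (u,v') ∈ G → (u',v) ∈ G → (u',v') ∈ G → u = u' ∨ v = v'

noncomputable def CF {α β : Type*} (U : Finset α) (V : Finset β) : Finset (Finset (α × β)) :=
  (U ×ˢ V).powerset.filter (fun G => C4F G)

noncomputable def nbr {α β : Type*} (G : Finset (α × β)) (V : Finset β) (u : α) : Finset β :=
  V.filter (fun v => (u,v) ∈ G)

noncomputable def nbl {α β : Type*} (G : Finset (α × β)) (U : Finset α) (v : β) : Finset α :=
  U.filter (fun u => (u,v) ∈ G)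

lemma mem_CF {α β : Type*} {U : Finset α} {V : Finset β} {G : Finset (α × β)} :
    G ∈ CF U V ↔ G ⊆ U ×ˢ V ∧ C4F G := by
  simp [CF]

lemma CF_swap {α β : Type*} (U : Finset α) (V : Finset β) (G : Finset (α × β)) (h : G ∈ CF U V) :
    G.map (Equiv.prodComm α β).toEmbedding ∈ CF V U := by
  rw [mem_CF] at h ⊢
  refine ⟨?_, ?_⟩
  · intro ⟨v, u⟩ hx
    simp at hx
    have := h.1 hx
    simp at this ⊢
    exact this.symm
  · intro v v' u u' h1 h2 h3 h4
    simp at h1 h2 h3 h4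
    exact (h.2 u u' v v' h1 h3 h2 h4).symm

lemma CF_card_swap {α β : Type*} (U : Finset α) (V : Finset β) : (CF U V).card ≤ (CF V U).card := by
  apply Finset.card_le_card_of_injOn (fun G => G.map (Equiv.prodComm α β).toEmbedding)
  · intro G hG; exact CF_swap U V G hG
  · intro G _ G' _ h
    exact Finset.map_injective _ h

lemma nbr_swap {α β : Type*} (G : Finset (α × β)) (V : Finset β) (u : α) :
    nbr G V u = nbl (G.map (Equiv.prodComm α β).toEmbedding) V u := by
  ext v; simp [nbr, nbl]

lemma nbl_swap {α β : Type*} (G : Finset (α × β)) (U : Finset α) (v : β) :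
    nbl G U v = nbr (G.map (Equiv.prodComm α β).toEmbedding) U v := by
  ext u; simp [nbr, nbl]

lemma nbr_inter {α β : Type*} {U : Finset α} {V : Finset β} {G : Finset (α × β)} (h : G ∈ CF U V)
    (p p' : α) (hne : p ≠ p') : (nbr G V p ∩ nbr G V p').card ≤ 1 := by
  rw [Finset.card_le_one]
  intro v hv v' hv'
  simp only [nbr, Finset.mem_inter, Finset.mem_filter] at hv hv'
  rcases (mem_CF.mp h).2 p p' v v' hv.1.2 hv'.1.2 hv.2.2 hv'.2.2 with h | h
  · exact absurd h hne
  · exact h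

lemma peel_count {α β : Type*} (U : Finset α) (V : Finset β) (v : β)
    (cond : Finset (α × β) → Finset α → Prop) (E : ℝ)
    (hE : ∀ G' ∈ CF U (V.erase v), ((U.powerset.filter (fun N => cond G' N ∧
      ∀ p ∈ N, ∀ p' ∈ N, p ≠ p' → Disjoint (nbr G' (V.erase v) p) (nbr G' (V.erase v) p'))).card : ℝ) ≤ E) :
    (((CF U V).filter (fun G => cond (G.filter (fun e => e.2 ≠ v)) (nbl G U v))).card : ℝ)
      ≤ E * (CF U (V.erase v)).card := by
  set X := (CF U (V.erase v)).sigma (fun G' => (U.powerset.filter (fun N => cond G' N ∧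
      ∀ p ∈ N, ∀ p' ∈ N, p ≠ p' → Disjoint (nbr G' (V.erase v) p) (nbr G' (V.erase v) p')))) with hX
  have h1 : ((CF U V).filter (fun G => cond (G.filter (fun e => e.2 ≠ v)) (nbl G U v))).card ≤ X.card := by
    apply Finset.card_le_card_of_injOn
      (fun G => (⟨G.filter (fun e => e.2 ≠ v), nbl G U v⟩ : (_ : Finset (α × β)) × Finset α))
    · intro G hG
      simp only [Finset.coe_filter, Set.mem_ofPred_eq] at hG
      obtain ⟨hG, hc⟩ := hG
      rw [mem_CF] at hG
      simp only [hX, Finset.mem_coe, Finset.mem_sigma, Finset.mem_filter, Finset.mem_powerset]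
      refine ⟨?_, Finset.filter_subset _ _, hc, ?_⟩
      · rw [mem_CF]
        refine ⟨?_, ?_⟩
        · intro e he
          have he' := Finset.mem_filter.mp he
          have := Finset.mem_product.mp (hG.1 he'.1)
          simp only [Finset.mem_product, Finset.mem_erase]
          exact ⟨this.1, he'.2, this.2⟩
        · intro u u' w w' h1 h2 h3 h4
          exact hG.2 u u' w w' (Finset.mem_filter.mp h1).1 (Finset.mem_filter.mp h2).1
            (Finset.mem_filter.mp h3).1 (Finset.mem_filter.mp h4).1
      · intro p hp p' hp' hne
        rw [Finset.disjoint_left]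
        intro w hw hw'
        simp only [nbr, nbl, Finset.mem_filter, Finset.mem_erase] at hw hw' hp hp'
        rcases hG.2 p p' v w hp.2 hw.2.1 hp'.2 hw'.2.1 with h | h
        · exact hne h
        · exact hw.1.1 h.symm
    · intro G hG G' hG' heq
      simp only [Finset.coe_filter, Set.mem_ofPred_eq] at hG hG'
      simp only [Sigma.mk.injEq, heq_eq_eq] at heq
      obtain ⟨e1, e2⟩ := heq
      have hs := (mem_CF.mp hG.1).1
      have hs' := (mem_CF.mp hG'.1).1
      ext ⟨u, w⟩
      by_cases hw : w = v
      · subst hw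
        have := congrArg (fun s => u ∈ s) e2
        simp only [nbl, Finset.mem_filter, eq_iff_iff] at this
        constructor
        · intro h; exact (this.mp ⟨(Finset.mem_product.mp (hs h)).1, h⟩).2
        · intro h; exact (this.mpr ⟨(Finset.mem_product.mp (hs' h)).1, h⟩).2
      · have := congrArg (fun s => (u,w) ∈ s) e1
        simpa [hw] using this
  rw [hX, Finset.card_sigma] at h1
  calc (((CF U V).filter (fun G => cond (G.filter (fun e => e.2 ≠ v)) (nbl G U v))).card : ℝ)
      ≤ ∑ G' ∈ CF U (V.erase v), ((U.powerset.filter (fun N => cond G' N ∧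
      ∀ p ∈ N, ∀ p' ∈ N, p ≠ p' → Disjoint (nbr G' (V.erase v) p) (nbr G' (V.erase v) p'))).card : ℝ) := by
        exact_mod_cast h1
    _ ≤ ∑ G' ∈ CF U (V.erase v), E := Finset.sum_le_sum hE
    _ = _ := by rw [Finset.sum_const, nsmul_eq_mul]; ring

/-- splitting by cardinality -/
lemma sum_over_card {α : Type*} (U : Finset α) (Pr : Finset α → Prop) {_ : DecidablePred Pr} (B : ℝ) (hB : 0 ≤ B)
    (h : ∀ d : ℕ, ((U.powerset.filter (fun N => Pr N ∧ N.card = d)).card : ℝ) ≤ B) :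
    ((U.powerset.filter Pr).card : ℝ) ≤ ((U.card : ℝ) + 1) * B := by
  have h1 := Finset.card_eq_sum_card_fiberwise (f := Finset.card) (s := U.powerset.filter Pr)
    (t := Finset.range (U.card + 1)) (by
      intro N hN
      simp only [Finset.coe_filter, Finset.mem_powerset, Set.mem_ofPred_eq] at hN
      simp only [Finset.coe_range, Set.mem_Iio]
      have := Finset.card_le_card hN.1
      omega)
  rw [h1]
  push_cast
  calc _ ≤ ∑ d ∈ Finset.range (U.card + 1), B := by
        apply Finset.sum_le_sum
        intro d _
        rw [Finset.filter_filter]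
        exact h d
    _ = _ := by rw [Finset.sum_const, nsmul_eq_mul]; simp

lemma deg_after {α β : Type*} (G : Finset (α × β)) (V : Finset β) (v : β) (u : α) :
    (nbr G V u).card ≤ (nbr (G.filter (fun e => e.2 ≠ v)) (V.erase v) u).card + 1 := by
  have : nbr G V u ⊆ insert v (nbr (G.filter (fun e => e.2 ≠ v)) (V.erase v) u) := by
    intro w hw
    simp only [nbr, Finset.mem_filter, Finset.mem_insert, Finset.mem_erase] at hw ⊢
    by_cases h : w = v
    · exact Or.inl h
    · exact Or.inr ⟨⟨h, hw.1⟩, hw.2, h⟩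
  exact (Finset.card_le_card this).trans (Finset.card_insert_le _ _)

lemma stepV {α β : Type*} (U : Finset α) (V : Finset β) (v : β) (s r L : ℝ)
    (hr : 0 < r) (hrs : r ≤ s) (hL : 2 ≤ L) (hrL : 2 * L ≤ r) (hlog : Real.log (s^2 + 1) ≤ L)
    (hU : (U.card : ℝ) ≤ s^2) (hV : (V.card : ℝ) ≤ r * s) :
    (((CF U V).filter (fun G => ∀ u ∈ U, r * min ((nbl G U v).card / s) 1 ≤ ((nbr G V u).card : ℝ))).card : ℝ)
      ≤ Real.exp (L + 6 * s + 9 * (s / r) * L ^ 4) * (CF U (V.erase v)).card := by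
  refine le_trans ?_ (peel_count U V v (fun G' N => ∀ u ∈ U, r * min (N.card / s) 1 - 1 ≤
    ((nbr G' (V.erase v) u).card : ℝ)) _ ?_)
  · norm_cast
    apply Finset.card_le_card
    intro G hG
    simp only [Finset.mem_filter] at hG ⊢
    refine ⟨hG.1, fun u hu => ?_⟩
    have h1 := hG.2 u hu
    have h2 : ((nbr G V u).card : ℝ) ≤ (nbr (G.filter (fun e => e.2 ≠ v)) (V.erase v) u).card + 1 := by
      exact_mod_cast deg_after G V v u
    linarith
  · intro G' hG'
    refine (sum_over_card U _ (Real.exp (6 * s + 9 * (s / r) * L ^ 4)) (Real.exp_pos _).le ?_).trans ?_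
    · intro d
      by_cases hd : ∀ u ∈ U, r * min (d / s) 1 - 1 ≤ ((nbr G' (V.erase v) u).card : ℝ)
      · refine le_trans ?_ (extV (nbr G' (V.erase v)) U (V.erase v) s r L d hr hrs hL hrL hlog hU
          (le_trans (by exact_mod_cast Finset.card_erase_le) hV) (fun p _ => Finset.filter_subset _ _)
          (fun p _ p' _ hne => nbr_inter hG' p p' hne) hd)
        norm_cast
        apply Finset.card_le_card
        intro N hN
        simp only [indepSets, Finset.mem_filter] at hN ⊢
        exact ⟨hN.1, hN.2.1.2, hN.2.2.le⟩
      · rw [Finset.card_eq_zero.mpr (Finset.eq_empty_iff_forall_notMem.mpr ?_)]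
        · simp; positivity
        · intro N hN
          simp only [Finset.mem_filter] at hN
          obtain ⟨_, ⟨h1, _⟩, rfl⟩ := hN
          exact hd h1
    · have hs : 0 < s := by linarith
      have : (U.card : ℝ) + 1 ≤ Real.exp L := by
        have := (Real.log_le_iff_le_exp (by positivity)).mp hlog
        linarith
      calc _ ≤ Real.exp L * Real.exp (6 * s + 9 * (s / r) * L ^ 4) := by gcongr
        _ = _ := by rw [← Real.exp_add]; congr 1; ring

lemma stepU {α β : Type*} (U : Finset α) (V : Finset β) (u : α) (s r L : ℝ)
    (hr : 0 < r) (hrs : r ≤ s) (hL : 2 ≤ L) (hrL : 2 * L ≤ r) (hlog : Real.log (s^2 + 1) ≤ L)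
    (hU : (U.card : ℝ) ≤ s^2) (hV : (V.card : ℝ) ≤ r * s) :
    (((CF U V).filter (fun G => ((nbr G V u).card : ℝ) < r ∧
        ∀ v ∈ V, s * ((nbr G V u).card / r) ≤ ((nbl G U v).card : ℝ))).card : ℝ)
      ≤ Real.exp (L + r * (6 + Real.log (s / r)) + 9 * L ^ 4) * (CF (U.erase u) V).card := by
  have hsw : (((CF V U).filter (fun G => ((nbl G V u).card : ℝ) < r ∧
        ∀ v ∈ V, s * ((nbl G V u).card / r) ≤ ((nbr G U v).card : ℝ))).card : ℝ)
      ≤ Real.exp (L + r * (6 + Real.log (s / r)) + 9 * L ^ 4) * (CF V (U.erase u)).card := by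
    refine le_trans ?_ (peel_count V U u (fun G' N => (N.card : ℝ) < r ∧ ∀ v ∈ V, s * (N.card / r) - 1 ≤
      ((nbr G' (U.erase u) v).card : ℝ)) _ ?_)
    · norm_cast
      apply Finset.card_le_card
      intro G hG
      simp only [Finset.mem_filter] at hG ⊢
      refine ⟨hG.1, hG.2.1, fun v hv => ?_⟩
      have h1 := hG.2.2 v hv
      have h2 : ((nbr G U v).card : ℝ) ≤ (nbr (G.filter (fun e => e.2 ≠ u)) (U.erase u) v).card + 1 := by
        exact_mod_cast deg_after G U u v
      linarith
    · intro G' hG'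
      refine (sum_over_card V _ (Real.exp (r * (6 + Real.log (s / r)) + 9 * L ^ 4)) (Real.exp_pos _).le ?_).trans ?_
      · intro d
        by_cases hd : (d : ℝ) < r ∧ ∀ v ∈ V, s * (d / r) - 1 ≤ ((nbr G' (U.erase u) v).card : ℝ)
        · refine le_trans ?_ (extU (nbr G' (U.erase u)) V (U.erase u) s r L d hr hrs hL hrL hlog hV
            (le_trans (by exact_mod_cast Finset.card_erase_le) hU) (fun p _ => Finset.filter_subset _ _)
            (fun p _ p' _ hne => nbr_inter hG' p p' hne) hd.1 hd.2)
          norm_cast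
          apply Finset.card_le_card
          intro N hN
          simp only [indepSets, Finset.mem_filter] at hN ⊢
          exact ⟨hN.1, hN.2.1.2, hN.2.2.le⟩
        · rw [Finset.card_eq_zero.mpr (Finset.eq_empty_iff_forall_notMem.mpr ?_)]
          · simp; positivity
          · intro N hN
            simp only [Finset.mem_filter] at hN
            obtain ⟨_, ⟨h1, _⟩, rfl⟩ := hN
            exact hd h1
      · have hs : 0 < s := by linarith
        have : (V.card : ℝ) + 1 ≤ Real.exp L := by
          have := (Real.log_le_iff_le_exp (by positivity)).mp hlog
          nlinarith
        calc _ ≤ Real.exp L * Real.exp (r * (6 + Real.log (s / r)) + 9 * L ^ 4) := by gcongr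
          _ = _ := by rw [← Real.exp_add]; congr 1; ring
  refine le_trans ?_ (hsw.trans ?_)
  · norm_cast
    apply Finset.card_le_card_of_injOn (fun G => G.map (Equiv.prodComm α β).toEmbedding)
    · intro G hG
      simp only [Finset.coe_filter, Set.mem_ofPred_eq] at hG ⊢
      refine ⟨CF_swap U V G hG.1, ?_⟩
      simp only [← nbr_swap, ← nbl_swap]
      exact hG.2
    · intro G _ G' _ h
      exact Finset.map_injective _ h
  · gcongr
    exact CF_card_swap _ _

lemma peel_exists {α β : Type*} (U : Finset α) (V : Finset β) (G : Finset (α × β)) (s r : ℝ)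
    (hr : 0 < r) (hs : 0 < s) (hne : U.Nonempty ∨ V.Nonempty) :
    (∃ v ∈ V, ∀ u ∈ U, r * min ((nbl G U v).card / s) 1 ≤ ((nbr G V u).card : ℝ)) ∨
    (∃ u ∈ U, ((nbr G V u).card : ℝ) < r ∧
        ∀ v ∈ V, s * ((nbr G V u).card / r) ≤ ((nbl G U v).card : ℝ)) := by
  rcases V.eq_empty_or_nonempty with hV | hV
  · right
    subst hV
    rcases hne with ⟨u, hu⟩ | h
    · exact ⟨u, hu, by simpa [nbr] using hr, by simp⟩
    · simp at h
  · obtain ⟨v0, hv0, hvmin⟩ := Finset.exists_min_image V (fun v => (nbl G U v).card) hV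
    by_cases hleft : ∀ u ∈ U, r * min ((nbl G U v0).card / s) 1 ≤ ((nbr G V u).card : ℝ)
    · exact Or.inl ⟨v0, hv0, hleft⟩
    · right
      push Not at hleft
      obtain ⟨u, hu, hlt⟩ := hleft
      refine ⟨u, hu, ?_, ?_⟩
      · have : r * min ((nbl G U v0).card / s) 1 ≤ r * 1 := by gcongr; exact min_le_right _ _
        linarith
      · intro v hv
        have h1 : r * min ((nbl G U v0).card / s) 1 ≤ r * ((nbl G U v0).card / s) := by
          gcongr; exact min_le_left _ _
        have h2 : ((nbl G U v0).card : ℝ) ≤ (nbl G U v).card := by exact_mod_cast hvmin v hv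
        have h3 : ((nbr G V u).card : ℝ) / r < (nbl G U v0).card / s := by
          rw [div_lt_iff₀ hr]; linarith
        rw [lt_div_iff₀ hs] at h3
        linarith

theorem kw_count {α β : Type*} (s r L : ℝ)
    (hr : 0 < r) (hrs : r ≤ s) (hL : 2 ≤ L) (hrL : 2 * L ≤ r) (hlog : Real.log (s^2 + 1) ≤ L) :
    ∀ m : ℕ, ∀ (U : Finset α) (V : Finset β), U.card + V.card = m →
    (U.card : ℝ) ≤ s^2 → (V.card : ℝ) ≤ r * s →
    ((CF U V).card : ℝ) ≤ Real.exp (V.card * (3 * L + 6 * s + 9 * (s / r) * L ^ 4) +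
      U.card * (3 * L + r * (6 + Real.log (s / r)) + 9 * L ^ 4)) := by
  intro m
  induction m with
  | zero =>
    intro U V h _ _
    have hU : U = ∅ := Finset.card_eq_zero.mp (by omega)
    have hV : V = ∅ := Finset.card_eq_zero.mp (by omega)
    subst hU; subst hV
    simp only [Finset.card_empty, Nat.cast_zero, zero_mul, add_zero, Real.exp_zero]
    norm_cast
    calc (CF (∅ : Finset α) (∅ : Finset β)).card ≤ ((∅ : Finset α) ×ˢ (∅ : Finset β)).powerset.card :=
          Finset.card_filter_le _ _
      _ = 1 := by simp
  | succ m ih =>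
    intro U V hm hU hV
    have hs : 0 < s := by linarith
    set cV := 3 * L + 6 * s + 9 * (s / r) * L ^ 4 with hcV
    set cU := 3 * L + r * (6 + Real.log (s / r)) + 9 * L ^ 4 with hcU
    set EV := Real.exp (L + 6 * s + 9 * (s / r) * L ^ 4) with hEV
    set EU := Real.exp (L + r * (6 + Real.log (s / r)) + 9 * L ^ 4) with hEU
    set M := Real.exp (V.card * cV + U.card * cU) with hM
    set A : β → Finset (Finset (α × β)) := fun v => (CF U V).filter (fun G => ∀ u ∈ U, r * min ((nbl G U v).card / s) 1 ≤ ((nbr G V u).card : ℝ)) with hA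
    set B : α → Finset (Finset (α × β)) := fun u => (CF U V).filter (fun G => ((nbr G V u).card : ℝ) < r ∧
        ∀ v ∈ V, s * ((nbr G V u).card / r) ≤ ((nbl G U v).card : ℝ)) with hB
    have hcover : CF U V ⊆ V.biUnion A ∪ U.biUnion B := by
      intro G hG
      have hne : U.Nonempty ∨ V.Nonempty := by
        by_contra hcon
        push Not at hcon
        rw [hcon.1, hcon.2] at hm
        simp at hm
      rcases peel_exists U V G s r hr hs hne with ⟨v, hv, h⟩ | ⟨u, hu, h⟩
      · apply Finset.mem_union_left
        exact Finset.mem_biUnion.mpr ⟨v, hv, Finset.mem_filter.mpr ⟨hG, h⟩⟩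
      · apply Finset.mem_union_right
        exact Finset.mem_biUnion.mpr ⟨u, hu, Finset.mem_filter.mpr ⟨hG, h⟩⟩
    have hc : ((CF U V).card : ℝ) ≤ ∑ v ∈ V, ((A v).card : ℝ) + ∑ u ∈ U, ((B u).card : ℝ) := by
      have := (Finset.card_le_card hcover).trans ((Finset.card_union_le _ _).trans
        (Nat.add_le_add Finset.card_biUnion_le Finset.card_biUnion_le))
      exact_mod_cast this
    have hUL : (U.card : ℝ) ≤ Real.exp L := by
      have := (Real.log_le_iff_le_exp (by positivity)).mp hlog
      linarith
    have hVL : (V.card : ℝ) ≤ Real.exp L := by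
      have := (Real.log_le_iff_le_exp (by positivity)).mp hlog
      nlinarith
    have h2L : Real.exp L * Real.exp (-(2 * L)) ≤ 1/2 := by
      rw [← Real.exp_add]
      have : L + -(2*L) = -L := by ring
      rw [this, Real.exp_neg, inv_le_comm₀ (Real.exp_pos _) (by norm_num)]
      have := Real.add_one_le_exp L
      norm_num
      linarith
    have hAv : ∀ v ∈ V, ((A v).card : ℝ) ≤ Real.exp (-(2 * L)) * M := by
      intro v hv
      have h1 := stepV U V v s r L hr hrs hL hrL hlog hU hV
      have hce : (V.erase v).card + 1 = V.card := Finset.card_erase_add_one hv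
      have hcer : ((V.erase v).card : ℝ) + 1 = V.card := by exact_mod_cast hce
      have h2 := ih U (V.erase v) (by omega) hU (by linarith)
      calc ((A v).card : ℝ) ≤ EV * (CF U (V.erase v)).card := h1
        _ ≤ EV * Real.exp ((V.erase v).card * cV + U.card * cU) := by gcongr
        _ = _ := by
          rw [hEV, hM, ← Real.exp_add, ← Real.exp_add, ← hcer]; congr 1; rw [hcV]; ring
    have hBu : ∀ u ∈ U, ((B u).card : ℝ) ≤ Real.exp (-(2 * L)) * M := by
      intro u hu
      have h1 := stepU U V u s r L hr hrs hL hrL hlog hU hV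
      have hce : (U.erase u).card + 1 = U.card := Finset.card_erase_add_one hu
      have hcer : ((U.erase u).card : ℝ) + 1 = U.card := by exact_mod_cast hce
      have h2 := ih (U.erase u) V (by omega) (by linarith) hV
      calc ((B u).card : ℝ) ≤ EU * (CF (U.erase u) V).card := h1
        _ ≤ EU * Real.exp (V.card * cV + (U.erase u).card * cU) := by gcongr
        _ = _ := by
          rw [hEU, hM, ← Real.exp_add, ← Real.exp_add, ← hcer]; congr 1; rw [hcU]; ring
    have hMpos : 0 < M := Real.exp_pos _
    calc ((CF U V).card : ℝ) ≤ _ := hc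
      _ ≤ ∑ v ∈ V, Real.exp (-(2 * L)) * M + ∑ u ∈ U, Real.exp (-(2 * L)) * M :=
          add_le_add (Finset.sum_le_sum hAv) (Finset.sum_le_sum hBu)
      _ = (V.card + U.card) * (Real.exp (-(2 * L)) * M) := by
          rw [Finset.sum_const, Finset.sum_const, nsmul_eq_mul, nsmul_eq_mul]; ring
      _ ≤ (Real.exp L + Real.exp L) * (Real.exp (-(2 * L)) * M) := by gcongr
      _ = 2 * (Real.exp L * Real.exp (-(2*L))) * M := by ring
      _ ≤ 2 * (1/2) * M := by gcongr
      _ = M := by ring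

theorem kw_final {α β : Type*} (a b L : ℝ) (U : Finset α) (V : Finset β) (hb : 0 < b) (hba : b ≤ a)
    (hL : 2 ≤ L) (hbL : 2 * L * √a ≤ b) (hlog : Real.log (a + 1) ≤ L)
    (hU : (U.card : ℝ) ≤ a) (hV : (V.card : ℝ) ≤ b) :
    ((CF U V).card : ℝ) ≤ Real.exp (b * √a * (12 + Real.log (a / b)) + 24 * a * L ^ 4) := by
  have ha : 0 < a := by linarith
  set s := √a with hs
  have hs0 : 0 < s := Real.sqrt_pos.mpr ha
  have hs2 : s ^ 2 = a := Real.sq_sqrt ha.le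
  set r := b / s with hr
  have hr0 : 0 < r := by positivity
  have hrs : r * s = b := by rw [hr]; field_simp
  have hsr : s / r = a / b := by rw [hr, ← hs2]; field_simp
  have hrles : r ≤ s := by rw [hr, div_le_iff₀ hs0, ← sq, hs2]; exact hba
  have hrL : 2 * L ≤ r := by rw [hr, le_div_iff₀ hs0]; exact hbL
  refine (kw_count s r L hr0 hrles hL hrL (by rw [hs2]; exact hlog) _ U V rfl (by rw [hs2]; exact hU)
    (by rw [hrs]; exact hV)).trans ?_
  apply Real.exp_le_exp.mpr
  rw [hsr]
  have hab : 1 ≤ a / b := by rw [one_le_div hb]; exact hba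
  have hlab : 0 ≤ Real.log (a / b) := Real.log_nonneg hab
  have hL4 : 3 * L ≤ 3 * L ^ 4 := by
    have : 1 ≤ L^3 := one_le_pow₀ (by linarith)
    nlinarith
  calc (V.card : ℝ) * (3 * L + 6 * s + 9 * (a / b) * L ^ 4) +
      U.card * (3 * L + r * (6 + Real.log (a / b)) + 9 * L ^ 4)
      ≤ b * (3 * L^4 + 6 * s + 9 * (a / b) * L ^ 4) +
      a * (3 * L^4 + r * (6 + Real.log (a / b)) + 9 * L ^ 4) := by gcongr
    _ = 3 * b * L^4 + 6 * b * s + 9 * a * L^4 + 12 * a * L^4 + b * s * (6 + Real.log (a / b)) := by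
        have : a * r = b * s := by rw [← hs2, ← hrs]; ring
        have h2 : b * (a/b) = a := by field_simp
        linear_combination (9 * L^4) * h2 + (6 + Real.log (a / b)) * this
    _ ≤ _ := by
        have : b * L^4 ≤ a * L^4 := by gcongr
        nlinarith


lemma sieve_A (X : ℕ) (F : Finset ℕ) (hF : F ⊆ Finset.Icc 1 X)
    (hdiv : ∀ m ∈ F, ∀ d, d ∣ m → d ∈ F) :
    (F.card : ℝ) * Real.log X ≤ 7 * X * ∑ l ∈ F, (1 : ℝ) / l := by
  have h1 : ∑ m ∈ F, Real.log m ≤ 6 * X * ∑ l ∈ F, (1 : ℝ) / l := by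
    calc ∑ m ∈ F, Real.log m
        = ∑ m ∈ F, ∑ l ∈ F, if l ∣ m then ArithmeticFunction.vonMangoldt (m / l) else 0 := by
          apply Finset.sum_congr rfl
          intro m hm
          rw [← ArithmeticFunction.vonMangoldt_sum, ← Nat.sum_div_divisors, ← Finset.sum_filter]
          apply Finset.sum_congr _ (fun _ _ => rfl)
          ext l
          have hm1 := (Finset.mem_Icc.mp (hF hm)).1
          simp only [Nat.mem_divisors, Finset.mem_filter]
          constructor
          · rintro ⟨h, _⟩; exact ⟨hdiv m hm l h, h⟩
          · rintro ⟨_, h⟩; exact ⟨h, by omega⟩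
      _ = ∑ l ∈ F, ∑ m ∈ F, if l ∣ m then ArithmeticFunction.vonMangoldt (m / l) else 0 :=
          Finset.sum_comm
      _ ≤ ∑ l ∈ F, 6 * X * ((1 : ℝ) / l) := by
          apply Finset.sum_le_sum
          intro l hl
          have hl1 := (Finset.mem_Icc.mp (hF hl)).1
          rw [← Finset.sum_filter]
          have hinj : Set.InjOn (fun m => m / l) (F.filter (fun m => l ∣ m) : Finset ℕ) := by
            intro m hm m' hm' h
            simp only [Finset.coe_filter, Set.mem_ofPred_eq] at hm hm' h
            rw [← Nat.div_mul_cancel hm.2, ← Nat.div_mul_cancel hm'.2, h]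
          rw [← Finset.sum_image (f := fun d => ArithmeticFunction.vonMangoldt d) hinj]
          have h2 : ∑ d ∈ (F.filter (fun m => l ∣ m)).image (fun m => m / l), ArithmeticFunction.vonMangoldt d
              ≤ Chebyshev.psi ((X : ℝ) / l) := by
            unfold Chebyshev.psi
            apply Finset.sum_le_sum_of_subset_of_nonneg
            · intro d hd
              simp only [Finset.mem_image, Finset.mem_filter] at hd
              obtain ⟨m, ⟨hm, hlm⟩, rfl⟩ := hd
              have hm1 := Finset.mem_Icc.mp (hF hm)
              rw [Nat.floor_div_natCast, Nat.floor_natCast, Finset.mem_Ioc]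
              exact ⟨Nat.div_pos (Nat.le_of_dvd (by omega) hlm) (by omega), Nat.div_le_div_right hm1.2⟩
            · intro _ _ _; exact ArithmeticFunction.vonMangoldt_nonneg
          refine h2.trans ((Chebyshev.psi_le_const_mul_self (by positivity)).trans ?_)
          have h4 : Real.log 4 + 4 ≤ 6 := by
            have : Real.log 4 = 2 * Real.log 2 := by
              rw [show (4:ℝ) = 2 ^ 2 by norm_num, Real.log_pow]; norm_num
            have := Real.log_two_lt_d9
            linarith
          calc (Real.log 4 + 4) * ((X:ℝ) / l) ≤ 6 * (X / l) := by gcongr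
            _ = _ := by ring
      _ = _ := by rw [Finset.mul_sum]
  have h2 : ∑ m ∈ F, (Real.log X - Real.log m) ≤ X * ∑ l ∈ F, (1 : ℝ) / l := by
    rw [Finset.mul_sum]
    apply Finset.sum_le_sum
    intro m hm
    have hm1 := Finset.mem_Icc.mp (hF hm)
    have hm0 : (0:ℝ) < m := by exact_mod_cast hm1.1
    have hX0 : (0:ℝ) < X := by exact_mod_cast (by omega : 0 < X)
    rw [← Real.log_div hX0.ne' hm0.ne']
    have := Real.log_le_sub_one_of_pos (div_pos hX0 hm0)
    rw [mul_one_div]; linarith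
  rw [Finset.sum_sub_distrib, Finset.sum_const, nsmul_eq_mul] at h2
  linarith

lemma sieve_B (F s : Finset ℕ) (h : ∀ m ∈ F, m ≠ 0 ∧ ∀ p, p.Prime → p ∣ m → p ∈ s) :
    ∑ l ∈ F, (1 : ℝ) / l ≤ Real.exp (2 * ∑ p ∈ s.filter Nat.Prime, (1 : ℝ) / p) := by
  let f : ℕ →* ℝ := { toFun := fun n => (n : ℝ)⁻¹, map_one' := by simp, map_mul' := by intro a b; simp [mul_comm] }
  have hE := EulerProduct.summable_and_hasSum_factoredNumbers_prod_filter_prime_geometric (f := f) (by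
    intro p hp
    simp only [f, MonoidHom.coe_mk, OneHom.coe_mk, norm_inv, Real.norm_natCast]
    exact inv_lt_one_of_one_lt₀ (by exact_mod_cast hp.one_lt)) s
  have hsub : ∀ m ∈ F, m ∈ Nat.factoredNumbers s := by
    intro m hm
    rw [Nat.mem_factoredNumbers']
    exact fun p hp hpm => (h m hm).2 p hp hpm
  have h1 : ∑ l ∈ F, (1 : ℝ) / l ≤ ∏ p ∈ s with p.Prime, (1 - f p)⁻¹ := by
    have := sum_le_hasSum (F.attach.map ⟨fun m => (⟨m.1, hsub m.1 m.2⟩ : Nat.factoredNumbers s), by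
      intro a b hab; exact Subtype.ext (congrArg (fun z : Nat.factoredNumbers s => (z:ℕ)) hab)⟩) (fun m _ => by simp [f]) hE.2
    refine le_trans (le_of_eq ?_) this
    rw [Finset.sum_map]
    simp only [Function.Embedding.coeFn_mk, f, MonoidHom.coe_mk, OneHom.coe_mk, one_div]
    exact (Finset.sum_attach F (fun m => ((m:ℕ):ℝ)⁻¹)).symm
  refine h1.trans ?_
  rw [Finset.mul_sum, Real.exp_sum]
  apply Finset.prod_le_prod
  · intro p hp
    have hp := (Finset.mem_filter.mp hp).2
    have : (p:ℝ)⁻¹ < 1 := inv_lt_one_of_one_lt₀ (by exact_mod_cast hp.one_lt)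
    simp only [f, MonoidHom.coe_mk, OneHom.coe_mk]
    rw [inv_nonneg]; linarith
  · intro p hp
    have hp := (Finset.mem_filter.mp hp).2
    have h2 : (p:ℝ)⁻¹ ≤ 1/2 := by
      rw [inv_le_comm₀ (by exact_mod_cast hp.pos) (by norm_num)]
      norm_num; exact_mod_cast hp.two_le
    have h0 : 0 < (p:ℝ)⁻¹ := by have := hp.pos; positivity
    simp only [f, MonoidHom.coe_mk, OneHom.coe_mk, one_div]
    set x := (p:ℝ)⁻¹
    rw [inv_le_comm₀ (by linarith) (Real.exp_pos _), ← Real.exp_neg]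
    have h3 : Real.exp (-(2*x)) ≤ (1 + 2*x)⁻¹ := by
      rw [Real.exp_neg]
      apply inv_anti₀ (by linarith)
      linarith [Real.add_one_le_exp (2*x)]
    refine h3.trans ?_
    rw [inv_le_comm₀ (by linarith) (by linarith), inv_le_iff_one_le_mul₀ (by linarith)]
    nlinarith

lemma block_sum (s : Finset ℕ) (j : ℕ) (hj : 1 ≤ j) (hs : ∀ p ∈ s, p.Prime ∧ Nat.log 2 p = j) :
    ∑ p ∈ s, (1 : ℝ) / p ≤ 4 / j := by
  have hle : ∀ p ∈ s, 2 ^ j ≤ p := fun p hp => by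
    rw [← (hs p hp).2]; exact Nat.pow_log_le_self 2 (hs p hp).1.pos.ne'
  have hlt : ∀ p ∈ s, p < 2 ^ (j + 1) := fun p hp => by
    rw [← (hs p hp).2]; exact Nat.lt_pow_succ_log_self (by norm_num) p
  have h1 : (2 ^ j) ^ s.card ≤ 4 ^ (2 ^ (j + 1)) := by
    calc (2 ^ j) ^ s.card ≤ ∏ p ∈ s, p := Finset.pow_card_le_prod s _ _ hle
      _ ≤ primorial (2 ^ (j + 1)) := by
        unfold primorial
        apply Finset.prod_le_prod_of_subset_of_one_le'
        · intro p hp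
          simp only [Finset.mem_filter, Finset.mem_range]
          exact ⟨(hlt p hp).trans (Nat.lt_succ_self _), (hs p hp).1⟩
        · intro p hp _
          exact (Finset.mem_filter.mp hp).2.pos
      _ ≤ _ := primorial_le_four_pow _
  have h2 : j * s.card ≤ 4 * 2 ^ j := by
    rw [show (4:ℕ) = 2 ^ 2 by norm_num, ← pow_mul, ← pow_mul] at h1
    have := (Nat.pow_le_pow_iff_right (by norm_num : 1 < 2)).mp h1
    rw [pow_succ] at this
    omega
  have hj0 : (0:ℝ) < j := by exact_mod_cast hj
  calc ∑ p ∈ s, (1 : ℝ) / p ≤ ∑ p ∈ s, (1:ℝ) / 2 ^ j := by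
        apply Finset.sum_le_sum
        intro p hp
        apply one_div_le_one_div_of_le (by positivity)
        exact_mod_cast hle p hp
    _ = s.card / 2 ^ j := by rw [Finset.sum_const, nsmul_eq_mul]; ring
    _ ≤ 4 / j := by
        rw [div_le_div_iff₀ (by positivity) hj0, mul_comm]
        exact_mod_cast h2

lemma blocks_sum (s J : Finset ℕ) (hs : ∀ p ∈ s, p.Prime ∧ Nat.log 2 p ∈ J) :
    ∑ p ∈ s, (1 : ℝ) / p ≤ ∑ j ∈ J, 4 / (j : ℝ) := by
  rw [← Finset.sum_fiberwise_of_maps_to (g := fun p => Nat.log 2 p) (t := J) (fun p hp => (hs p hp).2)]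
  apply Finset.sum_le_sum
  intro j _
  rcases Nat.eq_zero_or_pos j with rfl | hj
  · rw [Finset.sum_eq_zero]
    · simp
    · intro p hp
      have hp' := Finset.mem_filter.mp hp
      have := (hs p hp'.1).1.two_le
      have h0 : 0 < Nat.log 2 p := Nat.log_pos (by norm_num) this
      omega
  · exact block_sum _ j hj (fun p hp => by
      have hp' := Finset.mem_filter.mp hp
      exact ⟨(hs p hp'.1).1, hp'.2⟩)

lemma sum_small (s : Finset ℕ) (k : ℕ) (hs : ∀ p ∈ s, p.Prime ∧ p < 2 ^ k) :
    ∑ p ∈ s, (1 : ℝ) / p ≤ 4 * (1 + Real.log (k + 1)) := by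
  refine (blocks_sum s (Finset.Icc 1 k) (fun p hp => ⟨(hs p hp).1, ?_⟩)).trans ?_
  · rw [Finset.mem_Icc]
    exact ⟨Nat.log_pos (by norm_num) (hs p hp).1.two_le,
      (Nat.log_lt_of_lt_pow (hs p hp).1.pos.ne' (hs p hp).2).le⟩
  · have h1 : ∑ j ∈ Finset.Icc 1 k, 4 / (j : ℝ) = 4 * ((harmonic k : ℚ) : ℝ) := by
      rw [harmonic_eq_sum_Icc]
      push_cast
      rw [Finset.mul_sum]
      rfl
    rw [h1]
    have h2 := harmonic_le_one_add_log k
    rcases Nat.eq_zero_or_pos k with rfl | hk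
    · simp
    · have h3 : Real.log k ≤ Real.log (k + 1) := Real.log_le_log (by exact_mod_cast hk) (by linarith)
      linarith

lemma sum_large (s : Finset ℕ) (n : ℕ) (hs : ∀ p ∈ s, p.Prime ∧ n < p ^ 16 ∧ p ≤ n) :
    ∑ p ∈ s, (1 : ℝ) / p ≤ 128 := by
  set M := Nat.log 2 n with hM
  refine (blocks_sum s ((Finset.Icc 1 M).filter (fun j => M + 1 ≤ 32 * j)) (fun p hp => ⟨(hs p hp).1, ?_⟩)).trans ?_
  · obtain ⟨hp1, hp2, hp3⟩ := hs p hp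
    have hj1 : 1 ≤ Nat.log 2 p := Nat.log_pos (by norm_num) hp1.two_le
    have hn : n ≠ 0 := by have := hp1.pos; omega
    rw [Finset.mem_filter, Finset.mem_Icc]
    refine ⟨⟨hj1, Nat.log_mono_right hp3⟩, ?_⟩
    have h1 : 2 ^ M < 2 ^ ((Nat.log 2 p + 1) * 16) := by
      calc 2 ^ M ≤ n := Nat.pow_log_le_self 2 hn
        _ < p ^ 16 := hp2
        _ ≤ (2 ^ (Nat.log 2 p + 1)) ^ 16 := Nat.pow_le_pow_left (Nat.lt_pow_succ_log_self (by norm_num) p).le 16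
        _ = _ := by rw [← pow_mul]
    have := (Nat.pow_lt_pow_iff_right (by norm_num : 1 < 2)).mp h1
    omega
  · calc ∑ j ∈ (Finset.Icc 1 M).filter (fun j => M + 1 ≤ 32 * j), 4 / (j:ℝ)
        ≤ ∑ j ∈ (Finset.Icc 1 M).filter (fun j => M + 1 ≤ 32 * j), (128:ℝ) / (M + 1) := by
          apply Finset.sum_le_sum
          intro j hj
          obtain ⟨hj1, hj2⟩ := Finset.mem_filter.mp hj
          have hj0 : (0:ℝ) < j := by exact_mod_cast (Finset.mem_Icc.mp hj1).1
          have : (M:ℝ) + 1 ≤ 32 * j := by exact_mod_cast hj2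
          rw [div_le_div_iff₀ hj0 (by positivity)]
          linarith
      _ = ((Finset.Icc 1 M).filter (fun j => M + 1 ≤ 32 * j)).card * ((128:ℝ) / (M + 1)) := by
          rw [Finset.sum_const, nsmul_eq_mul]
      _ ≤ (M + 1) * ((128:ℝ) / (M + 1)) := by
          gcongr
          have : ((Finset.Icc 1 M).filter (fun j => M + 1 ≤ 32 * j)).card ≤ M :=
            (Finset.card_filter_le _ _).trans (by simp)
          have : (((Finset.Icc 1 M).filter (fun j => M + 1 ≤ 32 * j)).card : ℝ) ≤ M := by exact_mod_cast this
          linarith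
      _ = 128 := by field_simp

noncomputable def SF (n X k : ℕ) : Finset ℕ :=
  (Finset.Icc 1 X).filter (fun m => ∀ p, p.Prime → p ∣ m → p < 2 ^ k ∨ n < p ^ 16)

theorem sieve (n X k : ℕ) (hX : X ≤ n) :
    ((SF n X k).card : ℝ) * Real.log X ≤ 7 * Real.exp 264 * X * ((k:ℝ) + 1) ^ 8 := by
  have hA := sieve_A X (SF n X k) (Finset.filter_subset _ _) (by
    intro m hm d hd
    simp only [SF, Finset.mem_filter, Finset.mem_Icc] at hm ⊢
    refine ⟨⟨Nat.pos_of_dvd_of_pos hd hm.1.1, (Nat.le_of_dvd hm.1.1 hd).trans hm.1.2⟩, ?_⟩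
    exact fun p hp hpd => hm.2 p hp (hpd.trans hd))
  have hB := sieve_B (SF n X k) ((Finset.Icc 1 n).filter (fun p => p < 2 ^ k) ∪
    (Finset.Icc 1 n).filter (fun p => n < p ^ 16)) (by
    intro m hm
    simp only [SF, Finset.mem_filter, Finset.mem_Icc] at hm
    refine ⟨by omega, fun p hp hpm => ?_⟩
    have := Nat.le_of_dvd hm.1.1 hpm
    have := hp.pos
    simp only [Finset.mem_union, Finset.mem_filter, Finset.mem_Icc]
    rcases hm.2 p hp hpm with h | h
    · left; exact ⟨by omega, h⟩
    · right; exact ⟨by omega, h⟩)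
  have hC : ∑ p ∈ ((Finset.Icc 1 n).filter (fun p => p < 2 ^ k) ∪
    (Finset.Icc 1 n).filter (fun p => n < p ^ 16)).filter Nat.Prime, (1:ℝ) / p
      ≤ 4 * (1 + Real.log (k + 1)) + 128 := by
    rw [Finset.filter_union]
    have h1 := sum_small (((Finset.Icc 1 n).filter (fun p => p < 2 ^ k)).filter Nat.Prime) k (by
      intro p hp
      simp only [Finset.mem_filter] at hp
      exact ⟨hp.2, hp.1.2⟩)
    have h2 := sum_large (((Finset.Icc 1 n).filter (fun p => n < p ^ 16)).filter Nat.Prime) n (by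
      intro p hp
      simp only [Finset.mem_filter, Finset.mem_Icc] at hp
      exact ⟨hp.2, hp.1.2, hp.1.1.2⟩)
    have h3 := Finset.sum_union_inter (f := fun p : ℕ => (1:ℝ) / p)
      (s₁ := ((Finset.Icc 1 n).filter (fun p => p < 2 ^ k)).filter Nat.Prime)
      (s₂ := ((Finset.Icc 1 n).filter (fun p => n < p ^ 16)).filter Nat.Prime)
    have h4 : 0 ≤ ∑ p ∈ ((Finset.Icc 1 n).filter (fun p => p < 2 ^ k)).filter Nat.Prime ∩
      ((Finset.Icc 1 n).filter (fun p => n < p ^ 16)).filter Nat.Prime, (1:ℝ) / p :=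
      Finset.sum_nonneg (fun _ _ => by positivity)
    linarith
  have hk : (0:ℝ) < (k:ℝ) + 1 := by positivity
  have hD : ∑ l ∈ SF n X k, (1 : ℝ) / l ≤ Real.exp 264 * ((k:ℝ) + 1) ^ 8 := by
    refine hB.trans ?_
    calc _ ≤ Real.exp (264 + 8 * Real.log (k + 1)) := by
          apply Real.exp_le_exp.mpr; linarith
      _ = _ := by
          rw [Real.exp_add]; congr 1
          rw [show (8:ℝ) * Real.log (k+1) = ((8:ℕ):ℝ) * Real.log (k+1) by norm_num, Real.exp_nat_mul,
            Real.exp_log hk]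
  calc _ ≤ _ := hA
    _ ≤ 7 * X * (Real.exp 264 * ((k:ℝ) + 1) ^ 8) := by gcongr
    _ = _ := by ring


lemma sidon_mono {A B : Finset ℕ} (h : A ⊆ B) (hB : MulSidon B) : MulSidon A := by
  rintro ⟨a, b, c, d, ha, hb, hc, hd, hr⟩
  exact hB ⟨a, b, c, d, h ha, h hb, h hc, h hd, hr⟩

lemma sidon_to_CF (K U V : Finset ℕ) (f g : ℕ → ℕ)
    (h : ∀ m ∈ K, f m * g m = m ∧ f m ∈ U ∧ g m ∈ V) :
    (K.powerset.filter (fun A => MulSidon A)).card ≤ (CF U V).card := by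
  apply Finset.card_le_card_of_injOn (fun A => A.image (fun m => (f m, g m)))
  · intro A hA
    simp only [Finset.coe_filter, Finset.mem_powerset, Set.mem_ofPred_eq] at hA
    rw [Finset.mem_coe, mem_CF]
    refine ⟨?_, ?_⟩
    · intro e he
      obtain ⟨m, hm, rfl⟩ := Finset.mem_image.mp he
      exact Finset.mem_product.mpr (h m (hA.1 hm)).2
    · intro u u' v v' h1 h2 h3 h4
      by_contra hcon
      push Not at hcon
      obtain ⟨hu, hv⟩ := hcon
      obtain ⟨m1, hm1, e1⟩ := Finset.mem_image.mp h1
      obtain ⟨m2, hm2, e2⟩ := Finset.mem_image.mp h2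
      obtain ⟨m3, hm3, e3⟩ := Finset.mem_image.mp h3
      obtain ⟨m4, hm4, e4⟩ := Finset.mem_image.mp h4
      simp only [Prod.mk.injEq] at e1 e2 e3 e4
      apply hA.2
      refine ⟨m1, m4, m2, m3, hm1, hm4, hm2, hm3, ?_, ?_, ?_, ?_, ?_, ?_, ?_⟩
      · rintro rfl; exact hu (e1.1.symm.trans e4.1)
      · rintro rfl; exact hv (e1.2.symm.trans e2.2)
      · rintro rfl; exact hu (e1.1.symm.trans e3.1)
      · rintro rfl; exact hu (e2.1.symm.trans e4.1)
      · rintro rfl; exact hv (e3.2.symm.trans e4.2)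
      · rintro rfl; exact hu (e2.1.symm.trans e3.1)
      · rw [← (h m1 (hA.1 hm1)).1, ← (h m2 (hA.1 hm2)).1, ← (h m3 (hA.1 hm3)).1, ← (h m4 (hA.1 hm4)).1,
          e1.1, e1.2, e2.1, e2.2, e3.1, e3.2, e4.1, e4.2]
        ring
  · have key : ∀ A ⊆ K, ∀ m ∈ K, m ∈ A ↔ (f m, g m) ∈ A.image (fun m => (f m, g m)) := by
      intro A hA m hm
      constructor
      · intro h'; exact Finset.mem_image_of_mem _ h'
      · intro h'
        obtain ⟨m', hm', e⟩ := Finset.mem_image.mp h'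
        simp only [Prod.mk.injEq] at e
        have : m' = m := by rw [← (h m hm).1, ← (h m' (hA hm')).1, e.1, e.2]
        rwa [← this]
    intro A hA B hB heq
    simp only [Finset.coe_filter, Finset.mem_powerset, Set.mem_ofPred_eq] at hA hB heq
    ext m
    by_cases hm : m ∈ K
    · rw [key A hA.1 m hm, heq, ← key B hB.1 m hm]
    · exact ⟨fun h' => absurd (hA.1 h') hm, fun h' => absurd (hB.1 h') hm⟩

noncomputable def uu (n m : ℕ) : ℕ := (m.divisors.filter (fun u => u ^ 3 ≤ n ^ 2)).sup id
noncomputable def vv (n m : ℕ) : ℕ := m / uu n m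

lemma uu_max (n m d : ℕ) (hm : 1 ≤ m) (hd : d ∣ m) (h : d ^ 3 ≤ n ^ 2) : d ≤ uu n m := by
  unfold uu
  exact Finset.le_sup (f := id) (Finset.mem_filter.mpr ⟨Nat.mem_divisors.mpr ⟨hd, by omega⟩, h⟩)

lemma uu_spec (n m : ℕ) (hm : 1 ≤ m) (hn : 1 ≤ n) : uu n m ∣ m ∧ (uu n m) ^ 3 ≤ n ^ 2 := by
  have hne : (m.divisors.filter (fun u => u ^ 3 ≤ n ^ 2)).Nonempty :=
    ⟨1, Finset.mem_filter.mpr ⟨Nat.mem_divisors.mpr ⟨one_dvd _, by omega⟩, by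
      rw [one_pow]; exact Nat.one_le_pow _ _ hn⟩⟩
  obtain ⟨x, hx, hxe⟩ := Finset.exists_mem_eq_sup _ hne id
  have : uu n m = x := hxe
  rw [this]
  have := Finset.mem_filter.mp hx
  exact ⟨(Nat.mem_divisors.mp this.1).1, this.2⟩

lemma uv_mul (n m : ℕ) (hm : 1 ≤ m) (hn : 1 ≤ n) : uu n m * vv n m = m :=
  Nat.mul_div_cancel' (uu_spec n m hm hn).1

lemma uu_pos (n m : ℕ) (hm : 1 ≤ m) (hn : 1 ≤ n) : 1 ≤ uu n m :=
  uu_max n m 1 hm (one_dvd _) (by rw [one_pow]; exact Nat.one_le_pow _ _ hn)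

lemma vv_pos (n m : ℕ) (hm : 1 ≤ m) (hn : 1 ≤ n) : 1 ≤ vv n m := by
  have := uv_mul n m hm hn
  rcases Nat.eq_zero_or_pos (vv n m) with h | h
  · rw [h] at this; omega
  · exact h

lemma prime_v (n m q : ℕ) (hm : 1 ≤ m) (hn : 1 ≤ n) (hq : q.Prime) (hqv : q ∣ vv n m) :
    n ^ 2 < (uu n m * q) ^ 3 := by
  by_contra hcon
  push Not at hcon
  have h1 : uu n m * q ∣ m := by
    conv_rhs => rw [← uv_mul n m hm hn]
    exact Nat.mul_dvd_mul_left _ hqv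
  have h2 := uu_max n m _ hm h1 hcon
  have := uu_pos n m hm hn
  have := hq.two_le
  nlinarith

lemma prime_u (n m q : ℕ) (hm : 1 ≤ m) (hn : 1 ≤ n) (hqu : q ∣ uu n m) :
    vv n m * q ≤ uu n m ∨ n ^ 2 < (vv n m * q) ^ 3 := by
  by_cases hcon : (vv n m * q) ^ 3 ≤ n ^ 2
  · left
    apply uu_max n m _ hm _ hcon
    conv_rhs => rw [← uv_mul n m hm hn]
    rw [mul_comm]
    exact Nat.mul_dvd_mul_right hqu _
  · right; omega

lemma v_le_u (n m : ℕ) (hm : 1 ≤ m) (hn : 1 ≤ n) (hmn : m ≤ n)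
    (hs : ∀ p, p.Prime → p ∣ m → p ^ 3 ≤ n ^ 2) : vv n m ≤ uu n m := by
  by_contra hcon
  push Not at hcon
  have huv := uv_mul n m hm hn
  have hu1 := uu_pos n m hm hn
  have hv3 : n ^ 2 < (vv n m) ^ 3 := by
    by_contra h
    push Not at h
    have := uu_max n m (vv n m) hm ⟨uu n m, by rw [mul_comm, huv]⟩ h
    omega
  have hu3 : (uu n m) ^ 3 < n := by
    have h1 : (uu n m) ^ 3 * (vv n m) ^ 3 ≤ n ^ 3 := by
      rw [← mul_pow, huv]; exact Nat.pow_le_pow_left hmn 3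
    have h2 : (uu n m) ^ 3 * n ^ 2 < n * n ^ 2 := by
      calc (uu n m) ^ 3 * n ^ 2 < (uu n m) ^ 3 * (vv n m) ^ 3 :=
            Nat.mul_lt_mul_of_pos_left hv3 (by positivity)
        _ ≤ n ^ 3 := h1
        _ = n * n ^ 2 := by ring
    exact lt_of_mul_lt_mul_right h2 (by positivity)
  have hq : (Nat.minFac (vv n m)).Prime := Nat.minFac_prime (by omega)
  have hqv := Nat.minFac_dvd (vv n m)
  have h1 := prime_v n m _ hm hn hq hqv
  have hqm : Nat.minFac (vv n m) ∣ m := hqv.trans ⟨uu n m, by rw [mul_comm, huv]⟩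
  have h2 := uu_max n m _ hm hqm (hs _ hq hqm)
  have h3 : (uu n m * Nat.minFac (vv n m)) ^ 3 ≤ (uu n m ^ 3) ^ 2 := by
    calc _ ≤ (uu n m * uu n m) ^ 3 := by gcongr
      _ = _ := by ring
  have h4 : (uu n m ^ 3) ^ 2 < n ^ 2 := Nat.pow_lt_pow_left hu3 (by norm_num)
  omega

/-- class index -/
noncomputable def cls (n m : ℕ) : ℕ := min (Nat.log 1024 n) (Nat.log 4 (n / (vv n m) ^ 2))

noncomputable def Uj (n j : ℕ) : Finset ℕ :=
  if j < Nat.log 1024 n then SF n (Nat.sqrt (4 ^ (j + 1) * n)) (2 * j + 2)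
  else (Finset.Icc 1 n).filter (fun u => u ^ 3 ≤ n ^ 2)

noncomputable def Vj (n j : ℕ) : Finset ℕ :=
  if j < Nat.log 1024 n then SF n (Nat.sqrt (n / 4 ^ j)) 0
  else Finset.Icc 1 (Nat.sqrt (n / 4 ^ j))

noncomputable def SmallN (n : ℕ) : Finset ℕ :=
  (Finset.Icc 1 n).filter (fun m => ∀ p, p.Prime → p ∣ m → p ^ 3 ≤ n ^ 2)

lemma cls_spec (n m : ℕ) (hm : m ∈ SmallN n) :
    uu n m * vv n m = m ∧ uu n m ∈ Uj n (cls n m) ∧ vv n m ∈ Vj n (cls n m) := by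
  simp only [SmallN, Finset.mem_filter, Finset.mem_Icc] at hm
  obtain ⟨⟨hm, hmn⟩, hs⟩ := hm
  have hn : 1 ≤ n := hm.trans hmn
  have huv := uv_mul n m hm hn
  have hu1 := uu_pos n m hm hn
  have hv1 := vv_pos n m hm hn
  have hvu := v_le_u n m hm hn hmn hs
  have hpu := prime_u n m
  have hpv := prime_v n m
  have hu3 := (uu_spec n m hm hn).2
  refine ⟨huv, ?_⟩
  have hcls : cls n m = min (Nat.log 1024 n) (Nat.log 4 (n / (vv n m) ^ 2)) := rfl
  set u := uu n m
  set v := vv n m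
  set j := cls n m
  have hv2 : v ^ 2 ≤ n := by nlinarith
  have hq0 : n / v ^ 2 ≠ 0 := by
    have := Nat.div_pos hv2 (by positivity)
    omega
  have hjv : 4 ^ j * v ^ 2 ≤ n := by
    have h1 : 4 ^ j ≤ n / v ^ 2 :=
      (Nat.pow_le_pow_right (by norm_num) (by rw [hcls]; exact min_le_right _ _)).trans
        (Nat.pow_log_le_self 4 hq0)
    exact (Nat.le_div_iff_mul_le (by positivity)).mp h1
  have hvX : v ≤ Nat.sqrt (n / 4 ^ j) := by
    rw [Nat.le_sqrt', Nat.le_div_iff_mul_le (by positivity)]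
    linarith
  have hun : u ≤ n := by nlinarith
  by_cases hj : j < Nat.log 1024 n
  · have hj2 : j = Nat.log 4 (n / v ^ 2) := by omega
    have hjlt : n < 4 ^ (j + 1) * v ^ 2 := by
      have h1 : n / v ^ 2 < 4 ^ (j + 1) := by
        rw [hj2]; exact Nat.lt_pow_succ_log_self (by norm_num) _
      exact (Nat.div_lt_iff_lt_mul (by positivity)).mp h1
    have hu2 : u ^ 2 ≤ 4 ^ (j + 1) * n := by
      have h1 : u ^ 2 * v ^ 2 ≤ (4 ^ (j + 1) * n) * v ^ 2 := by
        calc u ^ 2 * v ^ 2 = m ^ 2 := by rw [← huv]; ring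
          _ ≤ n * n := by nlinarith
          _ ≤ (4 ^ (j + 1) * v ^ 2) * n := by gcongr
          _ = _ := by ring
      exact le_of_mul_le_mul_right h1 (by positivity)
    simp only [Uj, Vj, if_pos hj, SF, Finset.mem_filter, Finset.mem_Icc]
    refine ⟨⟨⟨hu1, Nat.le_sqrt'.mpr hu2⟩, ?_⟩, ⟨hv1, hvX⟩, ?_⟩
    · intro q hq hqu
      rcases hpu q hm hn hqu with h | h
      · left
        have h1 : q * v ^ 2 < 4 ^ (j + 1) * v ^ 2 := by
          calc q * v ^ 2 = (v * q) * v := by ring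
            _ ≤ u * v := by gcongr
            _ ≤ n := by rw [huv]; exact hmn
            _ < _ := hjlt
        have h2 := lt_of_mul_lt_mul_right h1 (by positivity)
        calc q < 4 ^ (j + 1) := h2
          _ = 2 ^ (2 * j + 2) := by rw [show (4:ℕ) = 2 ^ 2 by norm_num, ← pow_mul]; congr 1
      · right
        have h1 : n ^ 3 * n < n ^ 3 * q ^ 6 := by
          calc n ^ 3 * n = (n ^ 2) ^ 2 := by ring
            _ < ((v * q) ^ 3) ^ 2 := Nat.pow_lt_pow_left h (by norm_num)
            _ = (v ^ 2) ^ 3 * q ^ 6 := by ring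
            _ ≤ n ^ 3 * q ^ 6 := by gcongr
        exact (lt_of_mul_lt_mul_left h1 (by positivity)).trans_le
          (Nat.pow_le_pow_right hq.pos (by norm_num))
    · intro q hq hqv
      right
      have h := hpv q hm hn hq hqv
      have hJ : 1024 ^ Nat.log 1024 n ≤ n := Nat.pow_log_le_self _ (by omega)
      have h64 : (4 ^ (j+1)) ^ 15 ≤ n ^ 3 := by
        calc (4 ^ (j+1)) ^ 15 ≤ (4 ^ (Nat.log 1024 n)) ^ 15 := by
              gcongr
              · norm_num
              · omega
          _ = (1024 ^ Nat.log 1024 n) ^ 3 := by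
              rw [show (1024:ℕ) = 4 ^ 5 by norm_num, ← pow_mul, ← pow_mul, ← pow_mul]; congr 1; ring
          _ ≤ n ^ 3 := by gcongr
      have h1 : n ^ 18 * n ^ 2 < n ^ 18 * (q ^ 15) ^ 2 := by
        calc n ^ 18 * n ^ 2 = ((n ^ 2) ^ 2) ^ 5 := by ring
          _ < (((u * q) ^ 3) ^ 2) ^ 5 :=
              Nat.pow_lt_pow_left (Nat.pow_lt_pow_left h (by norm_num)) (by norm_num)
          _ = (u ^ 2) ^ 15 * (q ^ 15) ^ 2 := by ring
          _ ≤ (4 ^ (j + 1) * n) ^ 15 * (q ^ 15) ^ 2 := by gcongr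
          _ = (4 ^ (j + 1)) ^ 15 * n ^ 15 * (q ^ 15) ^ 2 := by ring
          _ ≤ n ^ 3 * n ^ 15 * (q ^ 15) ^ 2 := by gcongr
          _ = _ := by ring
      have h2 : n ^ 2 < (q ^ 15) ^ 2 := lt_of_mul_lt_mul_left h1 (by positivity)
      have h3 : n < q ^ 15 := lt_of_pow_lt_pow_left₀ 2 (by positivity) h2
      exact h3.trans_le (Nat.pow_le_pow_right hq.pos (by norm_num))
  · simp only [Uj, Vj, if_neg hj, Finset.mem_filter, Finset.mem_Icc]
    exact ⟨⟨⟨hu1, hun⟩, hu3⟩, hv1, hvX⟩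

lemma small_class_count (n j : ℕ) :
    (((SmallN n).filter (fun m => cls n m = j)).powerset.filter (fun A => MulSidon A)).card
      ≤ (CF (Uj n j) (Vj n j)).card := by
  apply sidon_to_CF _ _ _ (uu n) (vv n)
  intro m hm
  obtain ⟨h1, rfl⟩ := Finset.mem_filter.mp hm
  exact cls_spec n m h1

lemma small_count (n : ℕ) :
    ((SmallN n).powerset.filter (fun A => MulSidon A)).card
      ≤ ∏ j ∈ Finset.range (Nat.log 1024 n + 1), (CF (Uj n j) (Vj n j)).card := by
  set J := Nat.log 1024 n with hJ
  have h1 : ((SmallN n).powerset.filter (fun A => MulSidon A)).card ≤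
      (Fintype.piFinset (fun j : Fin (J + 1) => ((SmallN n).filter (fun m => cls n m = j)).powerset.filter
        (fun A => MulSidon A))).card := by
    apply Finset.card_le_card_of_injOn (fun A => fun j : Fin (J+1) => A.filter (fun m => cls n m = j))
    · intro A hA
      simp only [Finset.coe_filter, Finset.mem_powerset, Set.mem_ofPred_eq] at hA
      rw [Finset.mem_coe, Fintype.mem_piFinset]
      intro j
      rw [Finset.mem_filter, Finset.mem_powerset]
      exact ⟨Finset.filter_subset_filter _ hA.1, sidon_mono (Finset.filter_subset _ _) hA.2⟩
    · intro A _ B _ h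
      ext m
      have hc : cls n m < J + 1 := by unfold cls; omega
      have := congrFun h ⟨cls n m, hc⟩
      have := congrArg (fun s => m ∈ s) this
      simpa using this
  rw [Fintype.card_piFinset] at h1
  rw [← Fin.prod_univ_eq_prod_range (fun j => (CF (Uj n j) (Vj n j)).card) (J+1)]
  exact h1.trans (Finset.prod_le_prod' (fun j _ => small_class_count n j))


noncomputable def LargeN (n : ℕ) : Finset ℕ :=
  (Finset.Icc 1 n).filter (fun m => ∃ p, p.Prime ∧ p ∣ m ∧ n ^ 2 < p ^ 3)

noncomputable def bigp (n m : ℕ) : ℕ := (m.primeFactors.filter (fun p => n ^ 2 < p ^ 3)).sup id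

noncomputable def PP (n : ℕ) : Finset ℕ := (Finset.Icc 1 n).filter (fun p => p.Prime ∧ n ^ 2 < p ^ 3)

lemma bigp_spec (n m : ℕ) (hm : m ∈ LargeN n) : bigp n m ∈ PP n ∧ bigp n m ∣ m := by
  simp only [LargeN, Finset.mem_filter, Finset.mem_Icc] at hm
  obtain ⟨⟨hm1, hmn⟩, p, hp, hpm, hpn⟩ := hm
  have hne : (m.primeFactors.filter (fun p => n ^ 2 < p ^ 3)).Nonempty :=
    ⟨p, Finset.mem_filter.mpr ⟨Nat.mem_primeFactors.mpr ⟨hp, hpm, by omega⟩, hpn⟩⟩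
  obtain ⟨x, hx, hxe⟩ := Finset.exists_mem_eq_sup _ hne id
  have : bigp n m = x := hxe
  rw [this]
  obtain ⟨h1, h2⟩ := Finset.mem_filter.mp hx
  obtain ⟨h3, h4, h5⟩ := Nat.mem_primeFactors.mp h1
  refine ⟨?_, h4⟩
  simp only [PP, Finset.mem_filter, Finset.mem_Icc]
  exact ⟨⟨h3.pos, (Nat.le_of_dvd hm1 h4).trans hmn⟩, h3, h2⟩

noncomputable def fA (n : ℕ) (A : Finset ℕ) (p : ℕ) : ℕ := (A.filter (fun m => bigp n m = p)).sup id / p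

noncomputable def restA (n : ℕ) (A : Finset ℕ) : Finset ℕ :=
  A.filter (fun m => m ≠ bigp n m * fA n A (bigp n m))

lemma fA_spec (n : ℕ) (A : Finset ℕ) (hA : A ⊆ LargeN n) (p : ℕ)
    (h : (A.filter (fun m => bigp n m = p)).Nonempty) :
    p * fA n A p ∈ A ∧ bigp n (p * fA n A p) = p ∧ fA n A p ≠ 0 := by
  obtain ⟨x, hx, hxe⟩ := Finset.exists_mem_eq_sup _ h id
  obtain ⟨h1, h2⟩ := Finset.mem_filter.mp hx
  have hd : p ∣ x := by rw [← h2]; exact (bigp_spec n x (hA h1)).2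
  have hf : p * fA n A p = x := by
    unfold fA
    rw [hxe]
    exact Nat.mul_div_cancel' hd
  rw [hf]
  refine ⟨h1, h2, ?_⟩
  intro h0
  rw [h0, mul_zero] at hf
  have := hA h1
  simp only [LargeN, Finset.mem_filter, Finset.mem_Icc] at this
  omega

lemma fA_empty (n : ℕ) (A : Finset ℕ) (p : ℕ)
    (h : ¬ (A.filter (fun m => bigp n m = p)).Nonempty) : fA n A p = 0 := by
  rw [Finset.not_nonempty_iff_eq_empty] at h
  unfold fA
  rw [h]; simp

lemma recon (n : ℕ) (A : Finset ℕ) (hA : A ⊆ LargeN n) :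
    A = restA n A ∪ ((PP n).filter (fun p => fA n A p ≠ 0)).image (fun p => p * fA n A p) := by
  ext m
  simp only [Finset.mem_union, Finset.mem_image, Finset.mem_filter, restA]
  constructor
  · intro hm
    by_cases h : m = bigp n m * fA n A (bigp n m)
    · right
      refine ⟨bigp n m, ⟨(bigp_spec n m (hA hm)).1, ?_⟩, h.symm⟩
      exact (fA_spec n A hA _ ⟨m, Finset.mem_filter.mpr ⟨hm, rfl⟩⟩).2.2
    · exact Or.inl ⟨hm, h⟩
  · rintro (h | ⟨p, ⟨_, hp⟩, rfl⟩)
    · exact h.1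
    · by_cases hne : (A.filter (fun m => bigp n m = p)).Nonempty
      · exact (fA_spec n A hA p hne).1
      · exact absurd (fA_empty n A p hne) hp

noncomputable def QQ (n : ℕ) : Finset ℕ := (Finset.Icc 1 n).filter (fun c => c ^ 3 ≤ n)

lemma cof_mem (n p c : ℕ) (hp : p ∈ PP n) (h : p * c ∈ LargeN n) : c ∈ QQ n := by
  simp only [PP, LargeN, QQ, Finset.mem_filter, Finset.mem_Icc] at *
  obtain ⟨⟨h1, h2⟩, _⟩ := h
  have hc : 1 ≤ c := by
    rcases Nat.eq_zero_or_pos c with h | h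
    · rw [h] at h1; omega
    · exact h
  refine ⟨⟨hc, ?_⟩, ?_⟩
  · nlinarith
  · have hn : 0 < n := by omega
    have h3 : n ^ 2 * c ^ 3 ≤ n ^ 2 * n := by
      calc n ^ 2 * c ^ 3 ≤ p ^ 3 * c ^ 3 := Nat.mul_le_mul_right _ hp.2.2.le
        _ = (p * c) ^ 3 := by ring
        _ ≤ n ^ 3 := Nat.pow_le_pow_left h2 3
        _ = _ := by ring
    exact le_of_mul_le_mul_left h3 (by positivity)

lemma rest_card (n : ℕ) (A : Finset ℕ) (hA : A ⊆ LargeN n) (hS : MulSidon A) :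
    (restA n A).card ≤ (QQ n).card ^ 2 := by
  rw [sq, ← Finset.card_product]
  have hrA : ∀ m ∈ restA n A, m ∈ A := fun m hm => (Finset.mem_filter.mp hm).1
  have hm : ∀ m ∈ A, bigp n m * (m / bigp n m) = m :=
    fun m hm => Nat.mul_div_cancel' (bigp_spec n m (hA hm)).2
  have hf : ∀ m ∈ A, _ := fun m hm => fA_spec n A hA (bigp n m) ⟨m, Finset.mem_filter.mpr ⟨hm, rfl⟩⟩
  apply Finset.card_le_card_of_injOn (fun m => (fA n A (bigp n m), m / bigp n m))
  · intro m hmr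
    have hmA := hrA m hmr
    rw [Finset.mem_coe, Finset.mem_product]
    exact ⟨cof_mem n (bigp n m) _ (bigp_spec n m (hA hmA)).1 (hA (hf m hmA).1),
      cof_mem n (bigp n m) _ (bigp_spec n m (hA hmA)).1 (by rw [hm m hmA]; exact hA hmA)⟩
  · intro m hmr m' hmr' heq
    have hmA := hrA m hmr
    have hmA' := hrA m' hmr'
    simp only [Prod.mk.injEq] at heq
    obtain ⟨e1, e2⟩ := heq
    by_contra hne
    have hpne : bigp n m ≠ bigp n m' := by
      intro h
      apply hne
      rw [← hm m hmA, ← hm m' hmA', ← e2, h]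
    obtain ⟨a1, a2, _⟩ := hf m hmA
    obtain ⟨b1, b2, _⟩ := hf m' hmA'
    have hr := (Finset.mem_filter.mp hmr).2
    have hr' := (Finset.mem_filter.mp hmr').2
    apply hS
    refine ⟨m, bigp n m' * fA n A (bigp n m'), m', bigp n m * fA n A (bigp n m), hmA, b1, hmA', a1,
      ?_, hne, hr, hr'.symm, ?_, ?_, ?_⟩
    · intro h
      apply hpne
      calc bigp n m = bigp n (bigp n m' * fA n A (bigp n m')) := by rw [← h]
        _ = _ := b2
    · intro h
      apply hpne
      rw [← a2, ← b2, h]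
    · intro h
      apply hpne
      calc bigp n m = bigp n (bigp n m * fA n A (bigp n m)) := a2.symm
        _ = _ := by rw [← h]
    · calc m * (bigp n m' * fA n A (bigp n m'))
          = (bigp n m * (m / bigp n m)) * (bigp n m' * fA n A (bigp n m')) := by rw [hm m hmA]
        _ = (bigp n m' * (m' / bigp n m')) * (bigp n m * fA n A (bigp n m)) := by rw [e1, e2]; ring
        _ = _ := by rw [hm m' hmA']

lemma T_eq (n : ℕ) : T n = ∏ p ∈ PP n, (n / p + 1) := by
  unfold T PP
  apply Finset.prod_congr _ (fun _ _ => rfl)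
  apply Finset.filter_congr
  intro p _
  apply and_congr_right
  intro _
  have h0 : (0:ℝ) ≤ (n:ℝ) ^ ((2:ℝ)/3) := by positivity
  have h1 : ((n:ℝ) ^ ((2:ℝ)/3)) ^ 3 = (n:ℝ) ^ 2 := by
    rw [← Real.rpow_natCast, ← Real.rpow_mul (by positivity)]
    norm_num
  rw [← pow_lt_pow_iff_left₀ h0 (by positivity) (three_ne_zero), h1]
  norm_cast

lemma large_count (n : ℕ) (hn : 1 ≤ n) :
    (((LargeN n).powerset.filter (fun A => MulSidon A)).card : ℝ)
      ≤ T n * Real.exp ((QQ n).card ^ 2 * Real.log n + 1) := by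
  set d := (QQ n).card ^ 2 with hd
  set Sub := (Finset.Icc 1 n).powerset.filter (fun I => I.card ≤ d) with hSub
  have h1 : ((LargeN n).powerset.filter (fun A => MulSidon A)).card ≤
      ((PP n).pi (fun p => Finset.range (n / p + 1)) ×ˢ Sub).card := by
    apply Finset.card_le_card_of_injOn (fun A => ((fun p _ => fA n A p), restA n A))
    · intro A hA
      simp only [Finset.coe_filter, Finset.mem_powerset, Set.mem_ofPred_eq] at hA
      rw [Finset.mem_coe, Finset.mem_product, Finset.mem_pi]
      refine ⟨?_, ?_⟩
      · intro p _
        rw [Finset.mem_range, Nat.lt_succ_iff]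
        apply Nat.div_le_div_right
        apply Finset.sup_le
        intro m hm
        have := hA.1 (Finset.mem_filter.mp hm).1
        exact (Finset.mem_Icc.mp (Finset.mem_filter.mp this).1).2
      · rw [hSub, Finset.mem_filter, Finset.mem_powerset]
        refine ⟨?_, rest_card n A hA.1 hA.2⟩
        exact (Finset.filter_subset _ _).trans (hA.1.trans (Finset.filter_subset _ _))
    · intro A hA B hB heq
      simp only [Finset.coe_filter, Finset.mem_powerset, Set.mem_ofPred_eq] at hA hB
      simp only [Prod.mk.injEq] at heq
      obtain ⟨e1, e2⟩ := heq
      have e3 : ∀ p ∈ PP n, fA n A p = fA n B p := fun p hp => congrFun (congrFun e1 p) hp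
      rw [recon n A hA.1, recon n B hB.1, e2]
      congr 1
      ext m
      simp only [Finset.mem_image, Finset.mem_filter]
      constructor
      · rintro ⟨p, ⟨hp, h⟩, rfl⟩
        exact ⟨p, ⟨hp, by rwa [← e3 p hp]⟩, by rw [e3 p hp]⟩
      · rintro ⟨p, ⟨hp, h⟩, rfl⟩
        exact ⟨p, ⟨hp, by rwa [e3 p hp]⟩, by rw [e3 p hp]⟩
  rw [Finset.card_product, Finset.card_pi] at h1
  simp only [Finset.card_range] at h1
  rw [← T_eq] at h1
  have hn0 : (0:ℝ) < n := by exact_mod_cast hn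
  have h2 := subsets_count (Finset.Icc 1 n) d ((n:ℝ)⁻¹) n (by positivity)
    (inv_le_one_of_one_le₀ (by exact_mod_cast hn)) (by simp)
  rw [inv_inv, inv_mul_cancel₀ hn0.ne'] at h2
  calc (((LargeN n).powerset.filter (fun A => MulSidon A)).card : ℝ) ≤ T n * Sub.card := by exact_mod_cast h1
    _ ≤ T n * ((n:ℝ) ^ d * Real.exp 1) := by gcongr
    _ = _ := by
        rw [Real.exp_add, mul_comm _ (Real.log n), Real.exp_mul, Real.exp_log hn0, hd]
        congr 2
        rw [← Real.rpow_natCast]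
        norm_cast

lemma QQ_card (n : ℕ) : (((QQ n).card : ℝ)) ^ 2 ≤ (n:ℝ) ^ ((2:ℝ)/3) := by
  have h1 : (QQ n).card ≤ ⌊(n:ℝ) ^ ((1:ℝ)/3)⌋₊ := by
    calc (QQ n).card ≤ (Finset.Icc 1 ⌊(n:ℝ) ^ ((1:ℝ)/3)⌋₊).card := by
          apply Finset.card_le_card
          intro c hc
          simp only [QQ, Finset.mem_filter, Finset.mem_Icc] at hc ⊢
          refine ⟨hc.1.1, Nat.le_floor ?_⟩
          have : ((c:ℝ)^3) ≤ n := by exact_mod_cast hc.2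
          calc (c:ℝ) = ((c:ℝ)^3) ^ ((1:ℝ)/3) := by
                rw [← Real.rpow_natCast, ← Real.rpow_mul (by positivity)]; norm_num
            _ ≤ _ := by gcongr
      _ = _ := by simp
  have h2 : ((QQ n).card : ℝ) ≤ (n:ℝ) ^ ((1:ℝ)/3) :=
    (Nat.cast_le.mpr h1).trans (Nat.floor_le (by positivity))
  calc _ ≤ ((n:ℝ) ^ ((1:ℝ)/3)) ^ 2 := by gcongr
    _ = _ := by rw [← Real.rpow_natCast, ← Real.rpow_mul (by positivity)]; norm_num

lemma S_le (n : ℕ) : S n ≤ ((LargeN n).powerset.filter (fun A => MulSidon A)).card *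
    ((SmallN n).powerset.filter (fun A => MulSidon A)).card := by
  rw [← Finset.card_product]
  unfold S
  apply Finset.card_le_card_of_injOn (fun A => (A ∩ LargeN n, A ∩ SmallN n))
  · intro A hA
    simp only [Finset.coe_filter, Finset.mem_powerset, Set.mem_ofPred_eq] at hA
    rw [Finset.mem_coe, Finset.mem_product]
    simp only [Finset.mem_filter, Finset.mem_powerset]
    exact ⟨⟨Finset.inter_subset_right, sidon_mono Finset.inter_subset_left hA.2⟩,
      Finset.inter_subset_right, sidon_mono Finset.inter_subset_left hA.2⟩
  · intro A hA B hB heq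
    simp only [Finset.coe_filter, Finset.mem_powerset, Set.mem_ofPred_eq] at hA hB
    simp only [Prod.mk.injEq] at heq
    have hcov : Finset.Icc 1 n ⊆ LargeN n ∪ SmallN n := by
      intro m hm
      simp only [LargeN, SmallN, Finset.mem_union, Finset.mem_filter]
      by_cases h : ∃ p, p.Prime ∧ p ∣ m ∧ n ^ 2 < p ^ 3
      · exact Or.inl ⟨hm, h⟩
      · push Not at h
        exact Or.inr ⟨hm, h⟩
    rw [← Finset.inter_eq_left.mpr (hA.1.trans hcov), ← Finset.inter_eq_left.mpr (hB.1.trans hcov),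
      Finset.inter_union_distrib_left, Finset.inter_union_distrib_left, heq.1, heq.2]


lemma four_pow_real (j : ℕ) : (4:ℝ) ^ j = (2 ^ j) ^ 2 := by
  rw [show (4:ℝ) = 2 ^ 2 by norm_num, ← pow_mul, ← pow_mul, mul_comm]

lemma J_facts (n : ℕ) (hn : 1 ≤ n) (y : ℝ) (hy0 : 0 < y) (hy : y ^ 60 = n) :
    (2:ℝ) ^ (Nat.log 1024 n) ≤ y ^ 6 ∧ y ^ 6 ≤ 2 ^ (Nat.log 1024 n + 1) ∧
      ((Nat.log 1024 n : ℕ) : ℝ) ≤ Real.log n := by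
  have h1 : (1024:ℝ) ^ Nat.log 1024 n ≤ n := by exact_mod_cast Nat.pow_log_le_self 1024 (by omega)
  have h2 : (n:ℝ) < (1024:ℝ) ^ (Nat.log 1024 n + 1) := by
    exact_mod_cast Nat.lt_pow_succ_log_self (by norm_num) n
  have e : ∀ k : ℕ, (1024:ℝ) ^ k = (2 ^ k) ^ 10 := by
    intro k; rw [show (1024:ℝ) = 2 ^ 10 by norm_num, ← pow_mul, ← pow_mul, mul_comm]
  have ey : (n:ℝ) = (y ^ 6) ^ 10 := by rw [← hy]; ring
  refine ⟨?_, ?_, ?_⟩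
  · rw [e, ey] at h1
    exact le_of_pow_le_pow_left₀ (by norm_num) (by positivity) h1
  · rw [e, ey] at h2
    exact (lt_of_pow_lt_pow_left₀ 10 (by positivity) h2).le
  · have h3 := Real.log_le_log (by positivity) h1
    rw [Real.log_pow] at h3
    have h4 : 1 ≤ Real.log 1024 := by
      rw [show (1024:ℝ) = 2 ^ 10 by norm_num, Real.log_pow]
      have := Real.log_two_gt_d9
      norm_num; linarith
    have h5 : (0:ℝ) ≤ (Nat.log 1024 n : ℕ) := by positivity
    nlinarith

lemma U_card (n j : ℕ) (hn : 1 ≤ n) (y ℓ : ℝ) (hy1 : 1 ≤ y) (hy : y ^ 60 = n) (hℓ : ℓ = Real.log n)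
    (hℓ2 : 2 ≤ ℓ) (hj : j < Nat.log 1024 n) :
    ((Uj n j).card : ℝ) ≤ (7 * Real.exp 264 * 8 * 3 ^ 8) * (y ^ 30 * 2 ^ j * (j + 1) ^ 8) / ℓ := by
  rw [Uj, if_pos hj]
  set X := Nat.sqrt (4 ^ (j + 1) * n) with hX
  have hXn : X ≤ n := by
    have : 4 ^ (j + 1) ≤ n := by
      calc 4 ^ (j + 1) ≤ 1024 ^ (Nat.log 1024 n) := by
            calc 4 ^ (j+1) ≤ 1024 ^ (j+1) := Nat.pow_le_pow_left (by norm_num) _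
              _ ≤ _ := Nat.pow_le_pow_right (by norm_num) hj
        _ ≤ n := Nat.pow_log_le_self _ (by omega)
    calc X ≤ Nat.sqrt (n * n) := Nat.sqrt_le_sqrt (Nat.mul_le_mul_right _ this)
      _ = n := Nat.sqrt_eq n
  have hsv := sieve n X (2 * j + 2) hXn
  have hup : (X:ℝ) ≤ 2 ^ (j+1) * y ^ 30 := by
    have h1 : X ^ 2 ≤ 4 ^ (j+1) * n := Nat.sqrt_le' _
    have h2 : (X:ℝ) ^ 2 ≤ 4 ^ (j+1) * n := by exact_mod_cast h1
    apply le_of_pow_le_pow_left₀ (two_ne_zero) (by positivity)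
    refine h2.trans (le_of_eq ?_)
    rw [← hy, four_pow_real]; ring
  have hy30 : 1 ≤ y ^ 30 := one_le_pow₀ hy1
  have hlo : y ^ 30 ≤ X := by
    have h1 : 4 ^ (j+1) * n < (X + 1) ^ 2 := Nat.lt_succ_sqrt' _
    have h2 : (4:ℝ) ^ (j+1) * n < ((X:ℝ) + 1) ^ 2 := by exact_mod_cast h1
    have h3 : (2 * y ^ 30) ^ 2 < ((X:ℝ) + 1) ^ 2 := by
      refine lt_of_le_of_lt ?_ h2
      rw [← hy]
      have : (1:ℝ) ≤ 4 ^ j := one_le_pow₀ (by norm_num)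
      calc (2 * y ^ 30) ^ 2 = 4 * 1 * y ^ 60 := by ring
        _ ≤ 4 * 4 ^ j * y ^ 60 := by gcongr
        _ = _ := by ring
    have h4 := lt_of_pow_lt_pow_left₀ 2 (by positivity) h3
    linarith
  have hlog : ℓ / 4 ≤ Real.log X := by
    have h1 := Real.log_le_log (by positivity) hlo
    rw [Real.log_pow] at h1
    have h2 : ℓ = 60 * Real.log y := by rw [hℓ, ← hy, Real.log_pow]; norm_num
    push_cast at h1
    linarith
  rw [le_div_iff₀ (by linarith)]
  have hk : (((2 * j + 2 : ℕ) : ℝ) + 1) ≤ 3 * (j + 1) := by push_cast; have : (0:ℝ) ≤ j := by positivity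
                                                            linarith
  have h5 : ((SF n X (2 * j + 2)).card : ℝ) * (ℓ / 4) ≤ 7 * Real.exp 264 * (2 ^ (j+1) * y ^ 30) * (3 * (j + 1)) ^ 8 := by
    calc _ ≤ ((SF n X (2 * j + 2)).card : ℝ) * Real.log X := by gcongr
      _ ≤ _ := hsv
      _ ≤ _ := by gcongr
  calc _ = 4 * (((SF n X (2 * j + 2)).card : ℝ) * (ℓ / 4)) := by ring
    _ ≤ 4 * (7 * Real.exp 264 * (2 ^ (j+1) * y ^ 30) * (3 * (j + 1)) ^ 8) := by gcongr
    _ = _ := by ring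

lemma V_card (n j : ℕ) (y ℓ : ℝ) (hy1 : 2 ≤ y) (hy : y ^ 60 = n) (hℓ : ℓ = Real.log n)
    (hℓ2 : 2 ≤ ℓ) (hn : 1 ≤ n) (hj : j < Nat.log 1024 n) :
    ((Vj n j).card : ℝ) ≤ (7 * Real.exp 264 * 4 * 3 ^ 8) * (y ^ 30 / 2 ^ j) / ℓ := by
  rw [Vj, if_pos hj]
  set X := Nat.sqrt (n / 4 ^ j) with hX
  have hXn : X ≤ n := (Nat.sqrt_le_self _).trans (Nat.div_le_self _ _)
  have hsv := sieve n X 0 hXn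
  have hup : (X:ℝ) ≤ y ^ 30 / 2 ^ j := by
    have h1 : X ^ 2 ≤ n / 4 ^ j := Nat.sqrt_le' _
    rw [Nat.le_div_iff_mul_le (by positivity)] at h1
    have h2 : (X:ℝ) ^ 2 * 4 ^ j ≤ n := by exact_mod_cast h1
    rw [le_div_iff₀ (by positivity)]
    apply le_of_pow_le_pow_left₀ (two_ne_zero) (by positivity)
    calc ((X:ℝ) * 2 ^ j) ^ 2 = X ^ 2 * 4 ^ j := by
          rw [four_pow_real]; ring
      _ ≤ (n:ℝ) := h2
      _ = _ := by rw [← hy]; ring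
  have hJ := (J_facts n hn y (by linarith) hy).1
  have h2j : (2:ℝ) ^ j ≤ y ^ 6 := (pow_le_pow_right₀ (by norm_num) hj.le).trans hJ
  have hlo : y ^ 15 ≤ X := by
    have h1 : n / 4 ^ j < (X + 1) ^ 2 := Nat.lt_succ_sqrt' _
    rw [Nat.div_lt_iff_lt_mul (by positivity)] at h1
    have h2 : (n:ℝ) < ((X:ℝ) + 1) ^ 2 * 4 ^ j := by exact_mod_cast h1
    have h3 : (y ^ 24 * 2 ^ j) ^ 2 ≤ (((X:ℝ) + 1) * 2 ^ j) ^ 2 := by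
      calc (y ^ 24 * 2 ^ j) ^ 2 ≤ (y ^ 24 * y ^ 6) ^ 2 := by gcongr
        _ = (n:ℝ) := by rw [← hy]; ring
        _ ≤ _ := h2.le
        _ = _ := by rw [four_pow_real]; ring
    have h4 := le_of_pow_le_pow_left₀ two_ne_zero (by positivity) h3
    have h5 := le_of_mul_le_mul_right h4 (by positivity)
    have h6 : 1 ≤ y ^ 15 := one_le_pow₀ (by linarith)
    have h7 : 2 ≤ y ^ 9 := hy1.trans (le_self_pow₀ (by linarith) (by norm_num))
    have h8 : y ^ 24 = y ^ 15 * y ^ 9 := by ring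
    nlinarith
  have hlog : ℓ / 4 ≤ Real.log X := by
    have h1 := Real.log_le_log (by positivity) hlo
    rw [Real.log_pow] at h1
    have h2 : ℓ = 60 * Real.log y := by rw [hℓ, ← hy, Real.log_pow]; norm_num
    push_cast at h1
    linarith
  rw [le_div_iff₀ (by linarith)]
  have h5 : ((SF n X 0).card : ℝ) * (ℓ / 4) ≤ 7 * Real.exp 264 * (y ^ 30 / 2 ^ j) := by
    calc _ ≤ ((SF n X 0).card : ℝ) * Real.log X := by gcongr
      _ ≤ _ := hsv
      _ ≤ 7 * Real.exp 264 * (y ^ 30 / 2 ^ j) * (((0:ℕ):ℝ) + 1) ^ 8 := by gcongr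
      _ = _ := by norm_num
  have h6 : 0 ≤ 7 * Real.exp 264 * (y ^ 30 / 2 ^ j) := by positivity
  calc _ = 4 * (((SF n X 0).card : ℝ) * (ℓ / 4)) := by ring
    _ ≤ 4 * (7 * Real.exp 264 * (y ^ 30 / 2 ^ j)) := by gcongr
    _ ≤ 4 * (7 * Real.exp 264 * (y ^ 30 / 2 ^ j)) * 3 ^ 8 := le_mul_of_one_le_right (by positivity) (by norm_num)
    _ = _ := by ring

lemma cj_bound (n j : ℕ) (C1 y ℓ : ℝ) (hn : 1 ≤ n) (hC1 : 7 * Real.exp 264 * 8 * 3 ^ 8 ≤ C1)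
    (hC : 1 ≤ C1) (hy1 : 2 ≤ y) (hy : y ^ 60 = n) (hℓ : ℓ = Real.log n)
    (hℓ2 : 2 ≤ ℓ) (hbig : 4 * C1 * ℓ ^ 14 ≤ y) (hj : j < Nat.log 1024 n) :
    ((CF (Uj n j) (Vj n j)).card : ℝ) ≤ Real.exp (12 * (C1 * √C1) * (y ^ 45 / (ℓ * √ℓ)) *
      ((√2)⁻¹ ^ j * (j + 1) ^ 5) + 24 * C1 * y ^ 36 * ℓ ^ 11) := by
  obtain ⟨hJ1, _, hJ3⟩ := J_facts n hn y (by linarith) hy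
  have h2j : (2:ℝ) ^ j ≤ y ^ 6 := (pow_le_pow_right₀ (by norm_num) hj.le).trans hJ1
  have hjl : (j:ℝ) + 1 ≤ ℓ := by
    rw [hℓ]; refine le_trans ?_ hJ3; exact_mod_cast hj
  have hU := U_card n j hn y ℓ (by linarith) hy hℓ hℓ2 hj
  have hV := V_card n j y ℓ hy1 hy hℓ hℓ2 hn hj
  have hj0 : (0:ℝ) ≤ j := by positivity
  have hℓ0 : 0 < ℓ := by linarith
  have hy0 : 0 < y := by linarith
  set a := C1 * (y ^ 30 * 2 ^ j * (j + 1) ^ 8) / ℓ with ha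
  set b := C1 * (y ^ 30 / 2 ^ j) / ℓ with hb
  have ha0 : 0 < a := by positivity
  have hb0 : 0 < b := by positivity
  have h2j1 : (1:ℝ) ≤ 2 ^ j := one_le_pow₀ (by norm_num)
  have hj81 : (1:ℝ) ≤ (j + 1) ^ 8 := one_le_pow₀ (by linarith)
  have hab : a / b = (2 ^ j) ^ 2 * (j + 1) ^ 8 := by rw [ha, hb]; field_simp
  have hba : b ≤ a := by
    rw [← one_le_div hb0, hab]
    nlinarith
  have haup : a ≤ C1 * y ^ 36 * ℓ ^ 7 := by
    rw [ha, div_le_iff₀ hℓ0]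
    calc C1 * (y ^ 30 * 2 ^ j * (j + 1) ^ 8) ≤ C1 * (y ^ 30 * y ^ 6 * ℓ ^ 8) := by gcongr
      _ = _ := by ring
  have hl1 : ∀ k : ℕ, 1 ≤ ℓ ^ k := fun k => one_le_pow₀ (by linarith)
  have hbl : 2 * ℓ * √a ≤ b := by
    apply le_of_pow_le_pow_left₀ two_ne_zero hb0.le
    have hblo : C1 * y ^ 24 / ℓ ≤ b := by
      rw [hb]
      gcongr
      rw [le_div_iff₀ (by positivity)]
      calc y ^ 24 * 2 ^ j ≤ y ^ 24 * y ^ 6 := by gcongr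
        _ = _ := by ring
    calc (2 * ℓ * √a) ^ 2 = 4 * ℓ ^ 2 * (√a) ^ 2 := by ring
      _ = 4 * ℓ ^ 2 * a := by rw [Real.sq_sqrt ha0.le]
      _ ≤ 4 * ℓ ^ 2 * (C1 * y ^ 36 * ℓ ^ 7) := by gcongr
      _ ≤ (C1 * y ^ 24 / ℓ) ^ 2 := by
          rw [div_pow, le_div_iff₀ (by positivity)]
          have h1 : 4 * C1 * ℓ ^ 11 ≤ y := le_trans (by gcongr; linarith; norm_num) hbig
          have h2 : y ≤ y ^ 12 := le_self_pow₀ (by linarith) (by norm_num)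
          calc 4 * ℓ ^ 2 * (C1 * y ^ 36 * ℓ ^ 7) * ℓ ^ 2 = (4 * C1 * ℓ ^ 11) * y ^ 36 := by ring
            _ ≤ y ^ 12 * y ^ 36 := by gcongr; exact h1.trans h2
            _ = 1 * y ^ 48 := by ring
            _ ≤ C1 ^ 2 * y ^ 48 := by gcongr; exact one_le_pow₀ hC
            _ = _ := by ring
      _ ≤ b ^ 2 := by gcongr
  have hlog : Real.log (a + 1) ≤ ℓ := by
    rw [hℓ]
    apply Real.log_le_log (by positivity)
    have h1 : 4 * C1 * ℓ ^ 7 ≤ y := le_trans (by gcongr; linarith; norm_num) hbig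
    have h36 : 1 ≤ y ^ 36 := one_le_pow₀ (by linarith)
    have h3 : 1 ≤ C1 * y ^ 36 * ℓ ^ 7 := by
      have := hl1 7
      exact one_le_mul_of_one_le_of_one_le (one_le_mul_of_one_le_of_one_le hC h36) this
    calc a + 1 ≤ 4 * C1 * ℓ ^ 7 * y ^ 36 := by nlinarith
      _ ≤ y * y ^ 36 := by gcongr
      _ = y ^ 37 := by ring
      _ ≤ y ^ 60 := pow_le_pow_right₀ (by linarith) (by norm_num)
      _ = n := hy
  have hC1' : 7 * Real.exp 264 * 4 * 3 ^ 8 ≤ C1 := by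
    have := Real.exp_pos 264
    linarith
  have hmain := kw_final a b ℓ (Uj n j) (Vj n j) hb0 hba hℓ2 hbl hlog
    (hU.trans (by rw [ha]; gcongr)) (hV.trans (by rw [hb]; gcongr))
  refine hmain.trans (Real.exp_le_exp.mpr ?_)
  have hlab : Real.log (a / b) ≤ 10 * j := by
    rw [hab, Real.log_mul (by positivity) (by positivity), Real.log_pow, Real.log_pow, Real.log_pow]
    have h1 := Real.log_two_lt_d9
    have h2 : Real.log ((j:ℝ) + 1) ≤ j := by
      have := Real.log_le_sub_one_of_pos (by linarith : (0:ℝ) < j + 1)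
      linarith
    push_cast
    nlinarith
  have hbs : b * √a = (C1 * √C1) * (y ^ 45 / (ℓ * √ℓ)) * ((√2)⁻¹ ^ j * (j + 1) ^ 4) := by
    have hw : (√2) ^ 2 = 2 := Real.sq_sqrt (by norm_num)
    have hw0 : 0 < √2 := by positivity
    have hsa : √a = √C1 * y ^ 15 * (√2) ^ j * (j + 1) ^ 4 / √ℓ := by
      rw [Real.sqrt_eq_iff_mul_self_eq_of_pos (by positivity)]
      have e1 : √C1 * √C1 = C1 := Real.mul_self_sqrt (by linarith)
      have e2 : √ℓ * √ℓ = ℓ := Real.mul_self_sqrt (by linarith)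
      have e3 : (√2) ^ j * (√2) ^ j = 2 ^ j := by rw [← mul_pow, Real.mul_self_sqrt (by norm_num)]
      rw [div_mul_div_comm, e2, ha]
      congr 1
      calc _ = (√C1 * √C1) * y ^ 30 * ((√2) ^ j * (√2) ^ j) * (j + 1) ^ 8 := by ring
        _ = _ := by rw [e1, e3]; ring
    have e3 : (2:ℝ) ^ j = (√2) ^ j * (√2) ^ j := by rw [← mul_pow, Real.mul_self_sqrt (by norm_num)]
    rw [hsa, hb, e3, inv_pow]
    have : (0:ℝ) < (√2) ^ j := by positivity
    have : 0 < √ℓ := by positivity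
    generalize (√2) ^ j = z at *
    field_simp
  calc b * √a * (12 + Real.log (a / b)) + 24 * a * ℓ ^ 4
      ≤ b * √a * (12 * (j + 1)) + 24 * (C1 * y ^ 36 * ℓ ^ 7) * ℓ ^ 4 := by
        gcongr
        linarith
    _ = _ := by rw [hbs]; ring

lemma cJ_bound (n : ℕ) (y ℓ : ℝ) (hn : 1 ≤ n) (hy1 : 2 ≤ y) (hy : y ^ 60 = n) (hℓ : ℓ = Real.log n)
    (hℓ2 : 2 ≤ ℓ) (hbig : ℓ ≤ y) :
    ((CF (Uj n (Nat.log 1024 n)) (Vj n (Nat.log 1024 n))).card : ℝ) ≤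
      Real.exp (2 * y ^ 44 * (12 + ℓ) + 24 * y ^ 40 * ℓ ^ 4) := by
  obtain ⟨_, hJ2, _⟩ := J_facts n hn y (by linarith) hy
  set J := Nat.log 1024 n with hJ
  have hy0 : 0 < y := by linarith
  have hU : ((Uj n J).card : ℝ) ≤ y ^ 40 := by
    have h1 : (Uj n J).card ≤ ⌊y ^ 40⌋₊ := by
      calc (Uj n J).card ≤ (Finset.Icc 1 ⌊y ^ 40⌋₊).card := by
            apply Finset.card_le_card
            intro u hu
            simp only [Uj, hJ, lt_irrefl, if_false, Finset.mem_filter, Finset.mem_Icc] at hu ⊢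
            refine ⟨hu.1.1, Nat.le_floor ?_⟩
            have : (u:ℝ) ^ 3 ≤ n ^ 2 := by exact_mod_cast hu.2
            apply le_of_pow_le_pow_left₀ three_ne_zero (by positivity)
            refine this.trans (le_of_eq ?_)
            rw [← hy]; ring
        _ = _ := by simp
    exact (Nat.cast_le.mpr h1).trans (Nat.floor_le (by positivity))
  have hV : ((Vj n J).card : ℝ) ≤ 2 * y ^ 24 := by
    simp only [Vj, hJ, lt_irrefl, if_false]
    rw [← hJ]
    rw [Nat.card_Icc, Nat.add_sub_cancel]
    set X := Nat.sqrt (n / 4 ^ J) with hX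
    have h1 : X ^ 2 ≤ n / 4 ^ J := Nat.sqrt_le' _
    rw [Nat.le_div_iff_mul_le (by positivity)] at h1
    have h2 : (X:ℝ) ^ 2 * 4 ^ J ≤ n := by exact_mod_cast h1
    have h3 : (X:ℝ) * 2 ^ J ≤ y ^ 30 := by
      apply le_of_pow_le_pow_left₀ (two_ne_zero) (by positivity)
      calc ((X:ℝ) * 2 ^ J) ^ 2 = X ^ 2 * 4 ^ J := by
            rw [four_pow_real]; ring
        _ ≤ (n:ℝ) := h2
        _ = _ := by rw [← hy]; ring
    have h4 : (X:ℝ) * y ^ 6 ≤ (2 * y ^ 24) * y ^ 6 := by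
      calc (X:ℝ) * y ^ 6 ≤ X * 2 ^ (J + 1) := by gcongr
        _ = 2 * (X * 2 ^ J) := by ring
        _ ≤ 2 * y ^ 30 := by gcongr
        _ = _ := by ring
    exact le_of_mul_le_mul_right h4 (by positivity)
  have hsq : √(y ^ 40) = y ^ 20 := by
    rw [show y ^ 40 = (y ^ 20) ^ 2 by ring, Real.sqrt_sq (by positivity)]
  have h24 : 1 ≤ y ^ 24 := one_le_pow₀ (by linarith)
  have hp : ∀ k l : ℕ, k ≤ l → y ^ k ≤ y ^ l := fun k l h => pow_le_pow_right₀ (by linarith) h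
  have hlog40 : Real.log (y ^ 40) ≤ ℓ := by
    rw [hℓ, ← hy]
    exact Real.log_le_log (by positivity) (hp _ _ (by norm_num))
  have hmain := kw_final (y ^ 40) (2 * y ^ 24) ℓ (Uj n J) (Vj n J) (by positivity) (by
      calc 2 * y ^ 24 ≤ y * y ^ 24 := by gcongr
        _ = y ^ 25 := by ring
        _ ≤ _ := hp _ _ (by norm_num)) hℓ2 (by
      rw [hsq]
      calc 2 * ℓ * y ^ 20 ≤ 2 * y * y ^ 20 := by gcongr
        _ = 2 * y ^ 21 := by ring
        _ ≤ _ := by gcongr; linarith; norm_num) (by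
      rw [hℓ, ← hy]
      apply Real.log_le_log (by positivity)
      have : 1 ≤ y ^ 40 := one_le_pow₀ (by linarith)
      calc y ^ 40 + 1 ≤ 2 * y ^ 40 := by linarith
        _ ≤ y * y ^ 40 := by gcongr
        _ = y ^ 41 := by ring
        _ ≤ _ := hp _ _ (by norm_num)) hU hV
  refine hmain.trans (Real.exp_le_exp.mpr ?_)
  rw [hsq]
  have : Real.log (y ^ 40 / (2 * y ^ 24)) ≤ ℓ := by
    refine le_trans (Real.log_le_log (by positivity) ?_) hlog40
    apply div_le_self (by positivity)
    linarith
  calc 2 * y ^ 24 * y ^ 20 * (12 + Real.log (y ^ 40 / (2 * y ^ 24))) + 24 * y ^ 40 * ℓ ^ 4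
      ≤ 2 * y ^ 24 * y ^ 20 * (12 + ℓ) + 24 * y ^ 40 * ℓ ^ 4 := by gcongr
    _ = _ := by ring


lemma geo_summable : Summable (fun j : ℕ => (√2)⁻¹ ^ j * ((j:ℝ) + 1) ^ 5) := by
  have hw : 1 < √2 := by
    rw [show (1:ℝ) = √1 by simp]; exact Real.sqrt_lt_sqrt (by norm_num) (by norm_num)
  have hr : ‖(√2)⁻¹‖ < 1 := by
    rw [norm_inv, Real.norm_of_nonneg (by positivity)]
    exact inv_lt_one_of_one_lt₀ hw
  have h1 := summable_pow_mul_geometric_of_norm_lt_one 5 hr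
  have h2 := ((summable_nat_add_iff 1).mpr h1).mul_left (√2)
  refine h2.congr (fun j => ?_)
  push_cast
  rw [pow_succ (√2)⁻¹ j]
  have h0 : √2 * (√2)⁻¹ = 1 := mul_inv_cancel₀ (by positivity)
  linear_combination ((j:ℝ)+1)^5 * (√2)⁻¹^j * h0

lemma total_bound (n : ℕ) (C1 y ℓ W : ℝ) (hn : 1 ≤ n) (hC1 : 7 * Real.exp 264 * 8 * 3 ^ 8 ≤ C1)
    (hC : 1 ≤ C1) (hy0 : 0 < y) (hy : y ^ 60 = n) (hℓ : ℓ = Real.log n)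
    (hℓ2 : 2 ≤ ℓ) (hbig : 100 * C1 * ℓ ^ 14 ≤ y)
    (hW : W = ∑' j : ℕ, (√2)⁻¹ ^ j * ((j:ℝ) + 1) ^ 5) :
    (S n : ℝ) ≤ T n * Real.exp ((12 * (C1 * √C1) * W + 1) * (y ^ 45 / (ℓ * √ℓ))) := by
  have hl1 : ∀ k : ℕ, 1 ≤ ℓ ^ k := fun k => one_le_pow₀ (by linarith)
  have hlk : ∀ k l : ℕ, k ≤ l → ℓ ^ k ≤ ℓ ^ l := fun k l h => pow_le_pow_right₀ (by linarith) h
  have hy100 : 100 * C1 ≤ y := le_trans (le_mul_of_one_le_right (by positivity) (hl1 14)) hbig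
  have hy2 : 2 ≤ y := by linarith
  have hly : ℓ ≤ y := by
    have h1 := hlk 1 14 (by norm_num)
    rw [pow_one] at h1
    have := hl1 14
    nlinarith
  have hyk : ∀ k l : ℕ, k ≤ l → y ^ k ≤ y ^ l := fun k l h => pow_le_pow_right₀ (by linarith) h
  set D := y ^ 45 / (ℓ * √ℓ) with hD
  have hℓ0 : 0 < ℓ := by linarith
  have hD0 : 0 < D := by positivity
  set J := Nat.log 1024 n with hJ
  have hJl : (J:ℝ) ≤ ℓ := by rw [hℓ]; exact (J_facts n hn y hy0 hy).2.2
  have hsm : ((((SmallN n).powerset.filter (fun A => MulSidon A)).card : ℕ) : ℝ) ≤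
      Real.exp (12 * (C1 * √C1) * W * D + 24 * C1 * y ^ 36 * ℓ ^ 12 +
        (2 * y ^ 44 * (12 + ℓ) + 24 * y ^ 40 * ℓ ^ 4)) := by
    have h1 := small_count n
    rw [← hJ] at h1
    have h2 : ((((SmallN n).powerset.filter (fun A => MulSidon A)).card : ℕ) : ℝ) ≤
        ∏ j ∈ Finset.range (J + 1), ((CF (Uj n j) (Vj n j)).card : ℝ) := by exact_mod_cast h1
    refine h2.trans ?_
    rw [Finset.prod_range_succ, Real.exp_add]
    apply mul_le_mul _ (cJ_bound n y ℓ hn hy2 hy hℓ hℓ2 hly) (by positivity) (by positivity)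
    calc ∏ j ∈ Finset.range J, ((CF (Uj n j) (Vj n j)).card : ℝ)
        ≤ ∏ j ∈ Finset.range J, Real.exp (12 * (C1 * √C1) * D *
          ((√2)⁻¹ ^ j * (j + 1) ^ 5) + 24 * C1 * y ^ 36 * ℓ ^ 11) := by
          apply Finset.prod_le_prod
          · intro _ _; positivity
          · intro j hj
            refine cj_bound n j C1 y ℓ hn hC1 hC hy2 hy hℓ hℓ2 ?_ (Finset.mem_range.mp hj)
            refine le_trans ?_ hbig
            gcongr
            norm_num
      _ = Real.exp (∑ j ∈ Finset.range J, (12 * (C1 * √C1) * D *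
          ((√2)⁻¹ ^ j * ((j:ℝ) + 1) ^ 5) + 24 * C1 * y ^ 36 * ℓ ^ 11)) := (Real.exp_sum _ _).symm
      _ ≤ _ := by
          apply Real.exp_le_exp.mpr
          rw [Finset.sum_add_distrib, ← Finset.mul_sum, Finset.sum_const, Finset.card_range, nsmul_eq_mul]
          have h3 : ∑ j ∈ Finset.range J, (√2)⁻¹ ^ j * ((j:ℝ) + 1) ^ 5 ≤ W := by
            rw [hW]
            exact geo_summable.sum_le_tsum _ (fun _ _ => by positivity)
          have h4 : (J:ℝ) * (24 * C1 * y ^ 36 * ℓ ^ 11) ≤ ℓ * (24 * C1 * y ^ 36 * ℓ ^ 11) := by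
            apply mul_le_mul_of_nonneg_right hJl (by positivity)
          have h5 : 12 * (C1 * √C1) * D * ∑ j ∈ Finset.range J, (√2)⁻¹ ^ j * ((j:ℝ) + 1) ^ 5
              ≤ 12 * (C1 * √C1) * D * W := mul_le_mul_of_nonneg_left h3 (by positivity)
          have e1 : ℓ * (24 * C1 * y ^ 36 * ℓ ^ 11) = 24 * C1 * y ^ 36 * ℓ ^ 12 := by ring
          have e2 : 12 * (C1 * √C1) * D * W = 12 * (C1 * √C1) * W * D := by ring
          linarith
  have hla : ((((LargeN n).powerset.filter (fun A => MulSidon A)).card : ℕ) : ℝ) ≤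
      T n * Real.exp (y ^ 40 * ℓ + 1) := by
    refine (large_count n hn).trans ?_
    have hq := QQ_card n
    have h1 : (n:ℝ) ^ ((2:ℝ)/3) = y ^ 40 := by
      rw [← hy, ← Real.rpow_natCast, ← Real.rpow_natCast, ← Real.rpow_mul hy0.le]; norm_num
    rw [h1] at hq
    rw [← hℓ]
    have h2 : Real.exp (((QQ n).card:ℝ) ^ 2 * ℓ + 1) ≤ Real.exp (y ^ 40 * ℓ + 1) := by
      apply Real.exp_le_exp.mpr
      have := mul_le_mul_of_nonneg_right hq hℓ0.le
      linarith
    exact mul_le_mul_of_nonneg_left h2 (by positivity)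
  have herr : y ^ 40 * ℓ + 1 + 24 * C1 * y ^ 36 * ℓ ^ 12 + (2 * y ^ 44 * (12 + ℓ) + 24 * y ^ 40 * ℓ ^ 4) ≤ D := by
    set Z := C1 * y ^ 44 * ℓ ^ 12 with hZ
    have hgen : ∀ k l : ℕ, k ≤ 44 → l ≤ 12 → y ^ k * ℓ ^ l ≤ Z := by
      intro k l hk hl
      rw [hZ, mul_assoc]
      refine le_trans ?_ (le_mul_of_one_le_left (by positivity) hC)
      exact mul_le_mul (hyk _ _ hk) (hlk _ _ hl) (by positivity) (by positivity)
    have g1 := hgen 40 1 (by norm_num) (by norm_num)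
    have g2 := hgen 0 0 (by norm_num) (by norm_num)
    have g3 : C1 * (y ^ 36 * ℓ ^ 12) ≤ Z := by
      rw [hZ, mul_assoc]
      apply mul_le_mul_of_nonneg_left _ (by positivity)
      exact mul_le_mul_of_nonneg_right (hyk _ _ (by norm_num)) (by positivity)
    have g4 := hgen 44 0 (by norm_num) (by norm_num)
    have g5 := hgen 44 1 (by norm_num) (by norm_num)
    have g6 := hgen 40 4 (by norm_num) (by norm_num)
    simp only [pow_zero, pow_one, mul_one] at g1 g2 g4 g5
    have hZD : 100 * Z ≤ D := by
      have hs : √ℓ ≤ ℓ := by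
        rw [Real.sqrt_le_left hℓ0.le]; nlinarith
      have : y ^ 45 / (ℓ * ℓ) ≤ D := by rw [hD]; gcongr
      refine le_trans ?_ this
      rw [le_div_iff₀ (by positivity), hZ]
      calc 100 * (C1 * y ^ 44 * ℓ ^ 12) * (ℓ * ℓ) = (100 * C1 * ℓ ^ 14) * y ^ 44 := by ring
        _ ≤ y * y ^ 44 := by gcongr
        _ = y ^ 45 := by ring
    have hZ0 : 0 < Z := by positivity
    nlinarith
  calc (S n : ℝ) ≤ ((((LargeN n).powerset.filter (fun A => MulSidon A)).card : ℕ) : ℝ) *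
      ((((SmallN n).powerset.filter (fun A => MulSidon A)).card : ℕ) : ℝ) := by exact_mod_cast S_le n
    _ ≤ (T n * Real.exp (y ^ 40 * ℓ + 1)) * Real.exp (12 * (C1 * √C1) * W * D + 24 * C1 * y ^ 36 * ℓ ^ 12 +
        (2 * y ^ 44 * (12 + ℓ) + 24 * y ^ 40 * ℓ ^ 4)) := mul_le_mul hla hsm (by positivity) (by positivity)
    _ = T n * Real.exp ((y ^ 40 * ℓ + 1) + (12 * (C1 * √C1) * W * D + 24 * C1 * y ^ 36 * ℓ ^ 12 +
        (2 * y ^ 44 * (12 + ℓ) + 24 * y ^ 40 * ℓ ^ 4))) := by rw [mul_assoc, ← Real.exp_add]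
    _ ≤ _ := by
        apply mul_le_mul_of_nonneg_left _ (by positivity)
        apply Real.exp_le_exp.mpr
        linarith

lemma eventually_big (K : ℝ) (hK : 0 < K) : ∃ N : ℕ, ∀ n : ℕ, N ≤ n → 1 ≤ n ∧ 2 ≤ Real.log n ∧
    K * (Real.log n) ^ 14 ≤ (n:ℝ) ^ ((1:ℝ)/60) := by
  have h1 := (isLittleO_log_rpow_rpow_atTop (14:ℝ) (by norm_num : (0:ℝ) < 1/60)).def (inv_pos.mpr hK)
  have h2 := Real.tendsto_log_atTop.eventually_ge_atTop 2
  have h3 := (tendsto_natCast_atTop_atTop (R := ℝ)).eventually (h1.and h2)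
  have h4 := h3.and (Filter.eventually_ge_atTop 1)
  obtain ⟨N, hN⟩ := Filter.eventually_atTop.mp h4
  refine ⟨N, fun n hn => ?_⟩
  obtain ⟨⟨a, b⟩, c⟩ := hN n hn
  refine ⟨c, b, ?_⟩
  rw [Real.norm_of_nonneg (by positivity), Real.norm_of_nonneg (by positivity)] at a
  have e : Real.log n ^ (14:ℝ) = Real.log n ^ 14 := by
    rw [← Real.rpow_natCast]; norm_num
  rw [e] at a
  calc K * (Real.log n) ^ 14 ≤ K * (K⁻¹ * (n:ℝ) ^ ((1:ℝ)/60)) := by gcongr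
    _ = _ := by field_simp

theorem count_mulSidon_upper :
    ∃ C : ℝ, 0 < C ∧ ∃ N : ℕ, ∀ n : ℕ, N ≤ n →
      (S n : ℝ) ≤ (T n : ℝ) *
        2 ^ (C * (n : ℝ) ^ ((3 : ℝ)/4) / (Real.log n) ^ ((3 : ℝ)/2)) := by
  set C1 := 7 * Real.exp 264 * 8 * 3 ^ 8 with hC1
  have hC : 1 ≤ C1 := by
    have : 1 ≤ Real.exp 264 := Real.one_le_exp (by norm_num)
    rw [hC1]; linarith
  set W := ∑' j : ℕ, (√2)⁻¹ ^ j * ((j:ℝ) + 1) ^ 5 with hW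
  have hW0 : 0 ≤ W := tsum_nonneg (fun _ => by positivity)
  have hl2 : 0 < Real.log 2 := Real.log_pos (by norm_num)
  obtain ⟨N, hN⟩ := eventually_big (100 * C1) (by positivity)
  refine ⟨(12 * (C1 * √C1) * W + 1) / Real.log 2, by positivity, N, fun n hn => ?_⟩
  obtain ⟨hn1, hl, hb⟩ := hN n hn
  have hn0 : (0:ℝ) < n := by exact_mod_cast hn1
  have hy : ((n:ℝ) ^ ((1:ℝ)/60)) ^ 60 = n := by
    rw [← Real.rpow_natCast, ← Real.rpow_mul hn0.le]; norm_num
  have hmain := total_bound n C1 ((n:ℝ) ^ ((1:ℝ)/60)) (Real.log n) W hn1 le_rfl hC (by positivity) hy rfl hl hb hW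
  refine hmain.trans (le_of_eq ?_)
  have e1 : ((n:ℝ) ^ ((1:ℝ)/60)) ^ 45 = (n:ℝ) ^ ((3:ℝ)/4) := by
    rw [← Real.rpow_natCast, ← Real.rpow_mul hn0.le]; norm_num
  have e2 : Real.log n * √(Real.log n) = (Real.log n) ^ ((3:ℝ)/2) := by
    rw [Real.sqrt_eq_rpow]
    nth_rewrite 1 [← Real.rpow_one (Real.log n)]
    rw [← Real.rpow_add (by linarith)]; norm_num
  rw [e1, e2, Real.rpow_def_of_pos (by norm_num : (0:ℝ) < 2)]
  congr 2
  field_simp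
end

section
/- For every ε > 0 there exists N such that for all n ≥ N, the number S(n) of multiplicative Sidon subsets of [n] satisfies S(n) ≥ T(n) · 2^{(√2 − ε)·n^{3/4}/(log n)^{3/2}}, where log denotes the natural logarithm. -/
open scoped Classical

lemma ms_count (n : ℕ) (P E : Finset ℕ) (hP : ∀ p ∈ P, p.Prime ∧ n < p * p)
    (hE : E ⊆ Finset.Icc 1 n) (hE2 : ∀ e ∈ E, ∀ p ∈ P, ¬ p ∣ e) (hS : MulSidon E) :
    (∏ p ∈ P, (n / p + 1)) * 2 ^ E.card ≤ S n := by
  let X := (P.pi (fun p => Finset.range (n / p + 1))) ×ˢ E.powerset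
  have hX : X.card = (∏ p ∈ P, (n / p + 1)) * 2 ^ E.card := by
    simp [X, Finset.card_product, Finset.card_pi]
  rw [← hX]
  let G : ((p : ℕ) → p ∈ P → ℕ) → Finset ℕ := fun f =>
    (P.attach.image (fun p => p.1 * f p.1 p.2)).erase 0
  have hG : ∀ f x, x ∈ G f ↔ x ≠ 0 ∧ ∃ p, ∃ h : p ∈ P, p * f p h = x := by
    intro f x
    simp [G]
  have hle : ∀ f ∈ P.pi (fun p => Finset.range (n / p + 1)), ∀ p (h : p ∈ P), p * f p h ≤ n := by
    intro f hf p h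
    have := Finset.mem_pi.1 hf p h
    rw [Finset.mem_range] at this
    calc p * f p h ≤ p * (n / p) := Nat.mul_le_mul_left _ (by omega)
      _ ≤ n := Nat.mul_div_le n p
  have huniq : ∀ f ∈ P.pi (fun p => Finset.range (n / p + 1)), ∀ F ⊆ E, ∀ x ∈ F ∪ G f,
      ∀ p (h : p ∈ P), p ∣ x → x ≠ 0 ∧ x = p * f p h := by
    intro f hf F hF x hx p h hpx
    rw [Finset.mem_union] at hx
    rcases hx with hx | hx
    · exact absurd hpx (hE2 x (hF hx) p h)
    · obtain ⟨h0, p', h', rfl⟩ := (hG f x).1 hx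
      refine ⟨h0, ?_⟩
      by_cases hpp : p = p'
      · subst hpp; rfl
      · exfalso
        have hc : Nat.Coprime p p' := (Nat.coprime_primes (hP p h).1 (hP p' h').1).2 hpp
        have h1 : p ∣ f p' h' := hc.dvd_of_dvd_mul_left hpx
        have h2 : f p' h' ≠ 0 := by rintro h; simp [h] at h0
        have h3 := Nat.le_of_dvd (Nat.pos_of_ne_zero h2) h1
        have h4 := hle f hf p' h'
        have h5 := (hP p h).2
        have h6 := (hP p' h').2
        have h7 : f p' h' < p' := by
          by_contra hcon
          have := Nat.mul_le_mul_left p' (not_lt.1 hcon)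
          omega
        have h8 : p * p ≤ p' * p := Nat.mul_le_mul_right p (by omega)
        have h9 := Nat.mul_le_mul_left p' h3
        omega
  apply Finset.card_le_card_of_injOn (fun y => y.2 ∪ G y.1)
  · rintro ⟨f, F⟩ hy
    simp only [X, Finset.coe_product, Set.mem_prod, Finset.mem_coe, Finset.mem_powerset] at hy
    obtain ⟨hf, hF⟩ := hy
    have hu := huniq f hf F hF
    simp only [Finset.mem_coe, Finset.mem_filter, Finset.mem_powerset]
    constructor
    · intro x hx
      rw [Finset.mem_union] at hx
      rcases hx with hx | hx
      · exact hE (hF hx)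
      · obtain ⟨h0, p, h, rfl⟩ := (hG f x).1 hx
        rw [Finset.mem_Icc]
        exact ⟨Nat.pos_of_ne_zero h0, hle f hf p h⟩
    · rintro ⟨a₁, a₂, b₁, b₂, h1, h2, h3, h4, n1, n2, n3, n4, n5, n6, he⟩
      have key : ∀ x y z w, x ∈ F ∪ G f → y ∈ F ∪ G f → z ∈ F ∪ G f → x ≠ y → x ≠ z →
          x * w = y * z → x ∈ F := by
        intro x y z w hx hy hz hxy hxz hxe
        have hx' := hx
        rw [Finset.mem_union] at hx'
        rcases hx' with hx' | hx'
        · exact hx'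
        · exfalso
          obtain ⟨h0, p, h, hpx⟩ := (hG f x).1 hx'
          have hd : p ∣ y * z := by rw [← hxe, ← hpx]; exact (Dvd.intro _ rfl).mul_right _
          rcases (hP p h).1.dvd_mul.1 hd with hd | hd
          · exact hxy (by rw [← hpx, (hu y hy p h hd).2])
          · exact hxz (by rw [← hpx, (hu z hz p h hd).2])
      refine hS ⟨a₁, a₂, b₁, b₂, hF (key a₁ b₁ b₂ a₂ h1 h3 h4 n2 n3 he),
        hF (key a₂ b₁ b₂ a₁ h2 h3 h4 n4 n5 (by rw [mul_comm, he])),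
        hF (key b₁ a₁ a₂ b₂ h3 h1 h2 n2.symm n4.symm he.symm),
        hF (key b₂ a₁ a₂ b₁ h4 h1 h2 n3.symm n5.symm (by rw [mul_comm, he])),
        n1, n2, n3, n4, n5, n6, he⟩
  · rintro ⟨f, F⟩ hy ⟨f', F'⟩ hy' heq
    simp only [X, Finset.coe_product, Set.mem_prod, Finset.mem_coe, Finset.mem_powerset] at hy hy'
    obtain ⟨hf, hF⟩ := hy
    obtain ⟨hf', hF'⟩ := hy'
    simp only at heq
    have hu := huniq f hf F hF
    have hu' := huniq f' hf' F' hF'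
    have hFF : ∀ f F f' F', F ⊆ E → F ∪ G f = F' ∪ G f' → F ⊆ F' := by
      intro f F f' F' hF heq x hx
      have : x ∈ F' ∪ G f' := by rw [← heq]; exact Finset.mem_union_left _ hx
      rcases Finset.mem_union.1 this with h | h
      · exact h
      · obtain ⟨h0, p, h, hpx⟩ := (hG f' x).1 h
        exact absurd (Dvd.intro _ hpx) (hE2 x (hF hx) p h)
    have hff : ∀ f F f' F', (∀ x ∈ F' ∪ G f', ∀ p (h : p ∈ P), p ∣ x → x ≠ 0 ∧ x = p * f' p h) →
        F ∪ G f = F' ∪ G f' → ∀ p (h : p ∈ P), f p h ≠ 0 → f p h = f' p h := by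
      intro f F f' F' hu heq p h h0
      have hp := (hP p h).1.pos
      have : p * f p h ∈ F' ∪ G f' := by
        rw [← heq]; apply Finset.mem_union_right
        exact (hG _ _).2 ⟨by positivity, p, h, rfl⟩
      exact Nat.eq_of_mul_eq_mul_left hp (hu _ this p h (Dvd.intro _ rfl)).2
    have e2 : F = F' := Finset.Subset.antisymm (hFF f F f' F' hF heq) (hFF f' F' f F hF' heq.symm)
    have e1 : f = f' := by
      funext p h
      by_cases h0 : f p h = 0
      · by_cases h1 : f' p h = 0
        · rw [h0, h1]
        · exact (hff f' F' f F hu heq.symm p h h1).symm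
      · exact hff f F f' F' hu' heq p h h0
    rw [e1, e2]

lemma c4_free (q : ℕ) [Fact q.Prime] (t a b c d a' b' c' d' : ZMod q)
    (h1 : a' + b' - a * b = t) (h2 : b' + c' - b * c = t) (h3 : c' + d' - c * d = t)
    (h4 : d' + a' - d * a = t) : (a = c ∧ a' = c') ∨ (b = d ∧ b' = d') := by
  have h : (a - c) * (b - d) = 0 := by linear_combination -h1 + h2 - h3 + h4
  rcases mul_eq_zero.1 h with h | h
  · left
    have e : a = c := sub_eq_zero.1 h
    subst e
    exact ⟨rfl, by linear_combination h1 - h2⟩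
  · right
    have e : b = d := sub_eq_zero.1 h
    subst e
    exact ⟨rfl, by linear_combination h1 - h4⟩

lemma prime_cancel (f : ℕ → ℕ) (hf : ∀ i, (f i).Prime) (hinj : Function.Injective f)
    (i u X Y : ℕ) (h : f i * X = f u * Y) : (i = u ∧ X = Y) ∨ f i ∣ Y := by
  have hd : f i ∣ f u * Y := by rw [← h]; exact Dvd.intro _ rfl
  rcases (hf i).dvd_mul.1 hd with hd | hd
  · have e := hinj ((Nat.prime_dvd_prime_iff_eq (hf i) (hf u)).1 hd)
    subst e
    exact Or.inl ⟨rfl, Nat.eq_of_mul_eq_mul_left (hf i).pos h⟩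
  · exact Or.inr hd

lemma prime_perm2 (f : ℕ → ℕ) (hf : ∀ i, (f i).Prime) (hinj : Function.Injective f)
    (i j u v : ℕ) (h : f i * f j = f u * f v) : (i = u ∧ j = v) ∨ (i = v ∧ j = u) := by
  rcases prime_cancel f hf hinj i u _ _ h with ⟨h1, h2⟩ | h1
  · exact Or.inl ⟨h1, hinj h2⟩
  · have e := hinj ((Nat.prime_dvd_prime_iff_eq (hf i) (hf v)).1 h1)
    subst e
    rw [mul_comm (f u)] at h
    exact Or.inr ⟨rfl, hinj (Nat.eq_of_mul_eq_mul_left (hf i).pos h)⟩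

lemma prime_perm1 (f : ℕ → ℕ) (hf : ∀ i, (f i).Prime) (hinj : Function.Injective f)
    (i u v x X : ℕ) (h : f i * X = f u * f v * f x) :
    (i = u ∧ X = f v * f x) ∨ (i = v ∧ X = f u * f x) ∨ (i = x ∧ X = f u * f v) := by
  rcases prime_cancel f hf hinj i u X (f v * f x) (by rw [h]; ring) with h1 | h1
  · exact Or.inl h1
  · rcases (hf i).dvd_mul.1 h1 with hd | hd
    · have e := hinj ((Nat.prime_dvd_prime_iff_eq (hf i) (hf v)).1 hd)
      subst e
      exact Or.inr (Or.inl ⟨rfl, Nat.eq_of_mul_eq_mul_left (hf i).pos (by rw [h]; ring)⟩)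
    · have e := hinj ((Nat.prime_dvd_prime_iff_eq (hf i) (hf x)).1 hd)
      subst e
      exact Or.inr (Or.inr ⟨rfl, Nat.eq_of_mul_eq_mul_left (hf i).pos (by rw [h]; ring)⟩)

lemma prime_perm0 (f : ℕ → ℕ) (hf : ∀ i, (f i).Prime) (hinj : Function.Injective f)
    (i u v x y X : ℕ) (h : f i * X = f u * f v * (f x * f y)) :
    (i = u ∧ X = f v * f x * f y) ∨ (i = v ∧ X = f u * f x * f y) ∨
    (i = x ∧ X = f u * f v * f y) ∨ (i = y ∧ X = f u * f v * f x) := by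
  rcases prime_cancel f hf hinj i u X (f v * f x * f y) (by rw [h]; ring) with h1 | h1
  · exact Or.inl h1
  · obtain ⟨c, hc⟩ := h1
    right
    rcases prime_perm1 f hf hinj i v x y c hc.symm with ⟨rfl, h2⟩ | ⟨rfl, h2⟩ | ⟨rfl, h2⟩
    · exact Or.inl ⟨rfl, Nat.eq_of_mul_eq_mul_left (hf i).pos (by rw [h]; ring)⟩
    · exact Or.inr (Or.inl ⟨rfl, Nat.eq_of_mul_eq_mul_left (hf i).pos (by rw [h]; ring)⟩)
    · exact Or.inr (Or.inr ⟨rfl, Nat.eq_of_mul_eq_mul_left (hf i).pos (by rw [h]; ring)⟩)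

lemma graph_exists (q : ℕ) [Fact q.Prime] (f : ℕ → ℕ) (hf : ∀ i, (f i).Prime)
    (hinj : Function.Injective f) (D : Finset (ℕ × ℕ))
    (hD : ∀ e ∈ D, e.1 < e.2 ∧ e.2 < q ^ 2) :
    ∃ D' ⊆ D, D.card ≤ q * D'.card ∧ MulSidon (D'.image (fun e => f e.1 * f e.2)) ∧
      (D'.image (fun e => f e.1 * f e.2)).card = D'.card := by
  have hq : q.Prime := Fact.out
  let A : ℕ → ZMod q := fun i => (i : ZMod q)
  let B : ℕ → ZMod q := fun i => ((i / q : ℕ) : ZMod q)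
  have hAB : ∀ i j, i < q ^ 2 → j < q ^ 2 → A i = A j → B i = B j → i = j := by
    intro i j hi hj h1 h2
    have h1' := (ZMod.natCast_eq_natCast_iff' _ _ _).1 h1
    have h2' := (ZMod.natCast_eq_natCast_iff' _ _ _).1 h2
    rw [Nat.mod_eq_of_lt (Nat.div_lt_of_lt_mul (by nlinarith)),
      Nat.mod_eq_of_lt (Nat.div_lt_of_lt_mul (by nlinarith))] at h2'
    rw [← Nat.div_add_mod i q, ← Nat.div_add_mod j q, h1', h2']
  let c : ℕ × ℕ → ZMod q := fun e => B e.1 + B e.2 - A e.1 * A e.2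
  obtain ⟨t, -, ht⟩ : ∃ t ∈ (Finset.univ : Finset (ZMod q)),
      D.card ≤ q * (D.filter (fun e => c e = t)).card := by
    by_contra! hcon
    have h1 := Finset.card_eq_sum_card_fiberwise (f := c) (s := D) (t := Finset.univ)
      (by intro x _; simp)
    have h2 : ∑ t : ZMod q, q * (D.filter (fun e => c e = t)).card < ∑ t : ZMod q, D.card :=
      Finset.sum_lt_sum_of_nonempty ⟨0, Finset.mem_univ _⟩ hcon
    rw [← Finset.mul_sum, ← h1] at h2
    simp [ZMod.card] at h2
  refine ⟨_, Finset.filter_subset _ D, ht, ?_, ?_⟩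
  · rintro ⟨a₁, a₂, b₁, b₂, h1, h2, h3, h4, n1, n2, n3, n4, n5, n6, he⟩
    simp only [Finset.mem_image, Finset.mem_filter, Prod.exists] at h1 h2 h3 h4
    obtain ⟨i, j, ⟨hm1, hc1⟩, rfl⟩ := h1
    obtain ⟨k, l, ⟨hm2, hc2⟩, rfl⟩ := h2
    obtain ⟨u, v, ⟨hm3, hc3⟩, rfl⟩ := h3
    obtain ⟨x, y, ⟨hm4, hc4⟩, rfl⟩ := h4
    have g1 := hD _ hm1
    have g2 := hD _ hm2
    have g3 := hD _ hm3
    have g4 := hD _ hm4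
    simp only at g1 g2 g3 g4
    simp only [c] at hc1 hc2 hc3 hc4
    let R : ℕ → ℕ → Prop := fun i j => B i + B j - A i * A j = t
    have hsymm : ∀ i j, R i j → R j i := by
      intro i j h; simp only [R] at h ⊢; rw [← h]; ring
    have hC4 : ∀ i j k l, i < q ^ 2 → j < q ^ 2 → k < q ^ 2 → l < q ^ 2 →
        R i j → R j k → R k l → R l i → i = k ∨ j = l := by
      intro i j k l hi hj hk hl h1 h2 h3 h4
      rcases c4_free q t (A i) (A j) (A k) (A l) (B i) (B j) (B k) (B l) h1 h2 h3 h4 with h | h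
      · exact Or.inl (hAB i k hi hk h.1 h.2)
      · exact Or.inr (hAB j l hj hl h.1 h.2)
    have r1 : R i j := hc1
    have r2 : R k l := hc2
    have r3 : R u v := hc3
    have r4 : R x y := hc4
    clear_value R
    have m2 : ¬ (i = u ∧ j = v) := by rintro ⟨rfl, rfl⟩; exact n2 rfl
    have m3 : ¬ (i = x ∧ j = y) := by rintro ⟨rfl, rfl⟩; exact n3 rfl
    have m4 : ¬ (k = u ∧ l = v) := by rintro ⟨rfl, rfl⟩; exact n4 rfl
    have m5 : ¬ (k = x ∧ l = y) := by rintro ⟨rfl, rfl⟩; exact n5 rfl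
    have r1' := hsymm _ _ r1
    have r2' := hsymm _ _ r2
    have r3' := hsymm _ _ r3
    have r4' := hsymm _ _ r4
    have fin1 : R j k → R l i → i = k ∨ j = l := fun h h' =>
      hC4 i j k l (by omega) (by omega) (by omega) (by omega) r1 h r2 h'
    have fin2 : R j l → R k i → i = l ∨ j = k := fun h h' =>
      hC4 i j l k (by omega) (by omega) (by omega) (by omega) r1 h r2' h'
    clear hC4 hsymm hc1 hc2 hc3 hc4 hAB ht hm1 hm2 hm3 hm4 hD
    rw [mul_assoc] at he
    rcases prime_perm0 f hf hinj i u v x y _ he with ⟨e1, h⟩ | ⟨e1, h⟩ | ⟨e1, h⟩ | ⟨e1, h⟩ <;>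
    rcases prime_perm1 f hf hinj j _ _ _ _ h with ⟨e2, h⟩ | ⟨e2, h⟩ | ⟨e2, h⟩ <;>
    rcases prime_perm2 f hf hinj k l _ _ h with ⟨e3, e4⟩ | ⟨e3, e4⟩ <;>
    first
    | omega
    | (subst e1 e2 e3 e4
       refine Or.elim (fin1 ?_ ?_) ?_ ?_ <;> first | assumption | (intro h; omega))
    | (subst e1 e2 e3 e4
       refine Or.elim (fin2 ?_ ?_) ?_ ?_ <;> first | assumption | (intro h; omega))
  · apply Finset.card_image_of_injOn
    rintro ⟨i, j⟩ h1 ⟨u, v⟩ h2 he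
    simp only [Finset.coe_filter, Set.mem_ofPred_eq] at h1 h2
    have g1 := (hD _ h1.1).1
    have g2 := (hD _ h2.1).1
    simp only at g1 g2
    rcases prime_perm2 f hf hinj i j u v he with h | h
    · rw [h.1, h.2]
    · omega

lemma sum_min_lower (Q : ℕ) (M : ℝ) (hM : 0 < M) (hMQ : M ≤ (Q : ℝ) ^ 2) :
    M * (1 + Real.log ((Q : ℝ) ^ 2 / M)) - 2 * Q ≤
      ∑ i ∈ Finset.range Q, min (Q : ℝ) (M / (i + 1)) := by
  have hQ : (0 : ℝ) < Q := by
    rcases Nat.eq_zero_or_pos Q with h | h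
    · subst h; norm_num at hMQ; linarith
    · exact_mod_cast h
  set a := ⌊M / Q⌋₊ with ha
  have ha1 : (a : ℝ) ≤ M / Q := Nat.floor_le (by positivity)
  have ha2 : M / Q < a + 1 := Nat.lt_floor_add_one _
  have haQ : a ≤ Q := by
    have : (a : ℝ) ≤ Q := ha1.trans (by rw [div_le_iff₀ hQ]; nlinarith)
    exact_mod_cast this
  rw [← Finset.sum_range_add_sum_Ico _ haQ]
  have h1 : (a : ℝ) * Q ≤ ∑ i ∈ Finset.range a, min (Q : ℝ) (M / (i + 1)) := by
    have : ∑ i ∈ Finset.range a, (Q : ℝ) ≤ ∑ i ∈ Finset.range a, min (Q : ℝ) (M / (i + 1)) := by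
      apply Finset.sum_le_sum
      intro i hi
      refine le_min le_rfl ?_
      have : (i : ℝ) + 1 ≤ a := by exact_mod_cast Finset.mem_range.1 hi
      have h3 : (i : ℝ) + 1 ≤ M / Q := this.trans ha1
      rw [le_div_iff₀ hQ] at h3
      rw [le_div_iff₀ (by positivity)]
      linarith
    simpa using this
  have h2 : M * (Real.log (Q + 1) - Real.log (a + 1)) ≤
      ∑ i ∈ Finset.Ico a Q, min (Q : ℝ) (M / (i + 1)) := by
    have htel := Finset.sum_Ico_sub (fun i : ℕ => Real.log ((i : ℝ) + 1)) haQ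
    rw [← htel, Finset.mul_sum]
    apply Finset.sum_le_sum
    intro i hi
    have hai : (a : ℝ) ≤ i := by exact_mod_cast (Finset.mem_Ico.1 hi).1
    have hi0 : (0 : ℝ) < (i : ℝ) + 1 := by positivity
    have hlog : Real.log (((i + 1 : ℕ) : ℝ) + 1) - Real.log ((i : ℝ) + 1) ≤ 1 / (i + 1) := by
      push_cast
      rw [← Real.log_div (by positivity) (by positivity)]
      have := Real.log_le_sub_one_of_pos (x := ((i : ℝ) + 1 + 1) / (i + 1)) (by positivity)
      have e : ((i : ℝ) + 1 + 1) / (i + 1) - 1 = 1 / (i + 1) := by field_simp; ring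
      linarith
    have h3 : M * (Real.log (((i + 1 : ℕ) : ℝ) + 1) - Real.log ((i : ℝ) + 1)) ≤ M / (i + 1) := by
      calc _ ≤ M * (1 / (i + 1)) := mul_le_mul_of_nonneg_left hlog hM.le
        _ = M / (i + 1) := by ring
    refine le_min (h3.trans ?_) h3
    rw [div_le_iff₀ hi0]
    have h4 : M / Q ≤ i + 1 := by linarith
    rw [div_le_iff₀ hQ] at h4
    linarith
  have h3 : M - Q ≤ (a : ℝ) * Q := by
    rw [div_lt_iff₀ hQ] at ha2
    linarith
  have h4 : M * Real.log (a + 1) ≤ M * Real.log (M / Q) + Q := by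
    have e1 : Real.log (a + 1) ≤ Real.log (M / Q + 1) :=
      Real.log_le_log (by positivity) (by linarith)
    have e2 : Real.log (M / Q + 1) = Real.log (M / Q) + Real.log (1 + Q / M) := by
      rw [← Real.log_mul (by positivity) (by positivity)]
      congr 1
      field_simp
    have e3 : Real.log (1 + Q / M) ≤ Q / M := by
      have := Real.log_le_sub_one_of_pos (x := 1 + Q / M) (by positivity)
      linarith
    calc M * Real.log (a + 1) ≤ M * (Real.log (M / Q) + Q / M) :=
          mul_le_mul_of_nonneg_left (by linarith) hM.le
      _ = _ := by field_simp
  have h5 : M * Real.log Q ≤ M * Real.log (Q + 1) :=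
    mul_le_mul_of_nonneg_left (Real.log_le_log hQ (by linarith)) hM.le
  have h6 : Real.log ((Q : ℝ) ^ 2 / M) = Real.log Q - Real.log (M / Q) := by
    rw [← Real.log_div (by positivity) (by positivity)]
    congr 1
    field_simp
  rw [h6]
  linarith

lemma count_pairs (Q k0 : ℕ) (M : ℝ) (hM : 0 < M) (hMQ : M ≤ (Q : ℝ) ^ 2) :
    M * (1 + Real.log ((Q : ℝ) ^ 2 / M)) - (4 + 2 * k0) * Q ≤
      2 * (((Finset.range Q ×ˢ Finset.range Q).filter (fun e : ℕ × ℕ =>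
        k0 ≤ e.1 ∧ e.1 < e.2 ∧ ((e.1 : ℝ) + 1) * ((e.2 : ℝ) + 1) ≤ M)).card : ℝ) := by
  set D := (Finset.range Q ×ˢ Finset.range Q).filter (fun e : ℕ × ℕ =>
        k0 ≤ e.1 ∧ e.1 < e.2 ∧ ((e.1 : ℝ) + 1) * ((e.2 : ℝ) + 1) ≤ M) with hD
  set W := (Finset.range Q ×ˢ Finset.range Q).filter (fun e : ℕ × ℕ =>
        ((e.1 : ℝ) + 1) * ((e.2 : ℝ) + 1) ≤ M) with hW
  have h1 : ∑ i ∈ Finset.range Q, min (Q : ℝ) (M / (i + 1)) - Q ≤ (W.card : ℝ) := by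
    have hc : W.card = ∑ i ∈ Finset.range Q,
        ((Finset.range Q).filter (fun j : ℕ => ((i : ℝ) + 1) * ((j : ℝ) + 1) ≤ M)).card := by
      rw [hW, Finset.card_filter, Finset.sum_product]
      simp_rw [Finset.card_filter]
    rw [hc]
    push_cast
    have : ∑ i ∈ Finset.range Q, (min (Q : ℝ) (M / (i + 1)) - 1) ≤ ∑ i ∈ Finset.range Q,
        (((Finset.range Q).filter (fun j : ℕ => ((i : ℝ) + 1) * ((j : ℝ) + 1) ≤ M)).card : ℝ) := by
      apply Finset.sum_le_sum
      intro i _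
      have hi0 : (0 : ℝ) < (i : ℝ) + 1 := by positivity
      have hsub : Finset.range (min Q ⌊M / ((i : ℝ) + 1)⌋₊) ⊆
          (Finset.range Q).filter (fun j : ℕ => ((i : ℝ) + 1) * ((j : ℝ) + 1) ≤ M) := by
        intro j hj
        rw [Finset.mem_range, lt_min_iff] at hj
        rw [Finset.mem_filter, Finset.mem_range]
        refine ⟨hj.1, ?_⟩
        have h2 : ((j + 1 : ℕ) : ℝ) ≤ M / ((i : ℝ) + 1) :=
          (Nat.le_floor_iff (by positivity)).1 hj.2
        rw [le_div_iff₀ hi0] at h2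
        push_cast at h2
        linarith
      have hcard := Finset.card_le_card hsub
      rw [Finset.card_range] at hcard
      have hcard' : ((min Q ⌊M / ((i : ℝ) + 1)⌋₊ : ℕ) : ℝ) ≤ _ := Nat.cast_le.2 hcard
      refine le_trans ?_ hcard'
      push_cast
      have hfl := Nat.lt_floor_add_one (M / ((i : ℝ) + 1))
      rcases le_total (Q : ℝ) (⌊M / ((i : ℝ) + 1)⌋₊ : ℝ) with h | h
      · rw [min_eq_left h]
        linarith [min_le_left (Q : ℝ) (M / (i + 1))]
      · rw [min_eq_right h]
        linarith [min_le_right (Q : ℝ) (M / (i + 1))]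
    rw [Finset.sum_sub_distrib] at this
    simpa using this
  have h2 : W ⊆ D ∪ D.image Prod.swap ∪ (Finset.range Q).image (fun i => (i, i)) ∪
      (Finset.range k0 ×ˢ Finset.range Q) ∪ (Finset.range Q ×ˢ Finset.range k0) := by
    rintro ⟨i, j⟩ h
    simp only [hW, Finset.mem_filter, Finset.mem_product, Finset.mem_range] at h
    obtain ⟨⟨hi, hj⟩, hm⟩ := h
    simp only [hD, Finset.mem_union, Finset.mem_image, Finset.mem_filter, Finset.mem_product,
      Finset.mem_range, Prod.exists, Prod.swap_prod_mk, Prod.mk.injEq]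
    by_cases hik : i < k0
    · exact Or.inl (Or.inr ⟨hik, hj⟩)
    by_cases hjk : j < k0
    · exact Or.inr ⟨hi, hjk⟩
    left; left
    rcases lt_trichotomy i j with hij | hij | hij
    · left; left; exact ⟨⟨hi, hj⟩, by omega, hij, hm⟩
    · right; exact ⟨i, hi, rfl, hij⟩
    · left; right; exact ⟨j, i, ⟨⟨hj, hi⟩, by omega, hij, by linarith⟩, rfl, rfl⟩
  have h3 : W.card ≤ D.card + D.card + Q + k0 * Q + Q * k0 := by
    refine (Finset.card_le_card h2).trans ?_
    refine (Finset.card_union_le _ _).trans (Nat.add_le_add ?_ (by simp))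
    refine (Finset.card_union_le _ _).trans (Nat.add_le_add ?_ (by simp))
    refine (Finset.card_union_le _ _).trans (Nat.add_le_add ?_
      (Finset.card_image_le.trans (by simp)))
    exact (Finset.card_union_le _ _).trans (Nat.add_le_add le_rfl Finset.card_image_le)
  have h4 : (W.card : ℝ) ≤ D.card + D.card + Q + k0 * Q + Q * k0 := by exact_mod_cast h3
  have h5 := sum_min_lower Q M hM hMQ
  linarith

lemma cheb_nth : ∃ k0 : ℕ, ∀ i ≥ k0, 0.691 * (Nat.nth Nat.Prime i : ℝ) ≤
    ((i : ℝ) + 1) * Real.log (Nat.nth Nat.Prime i) := by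
  have hev : ∀ᶠ x : ℝ in Filter.atTop, ‖Real.log x‖ ≤ 0.001 * ‖id x‖ :=
    Real.isLittleO_log_id_atTop.bound (by norm_num)
  obtain ⟨x0, hx0⟩ := Filter.eventually_atTop.1 hev
  refine ⟨⌈x0⌉₊, fun i hi => ?_⟩
  set p := Nat.nth Nat.Prime i with hp
  have hpp : p.Prime := Nat.prime_nth_prime i
  have hip : i + 2 ≤ p := Nat.add_two_le_nth_prime i
  have hp2 : (2 : ℝ) ≤ p := by exact_mod_cast hpp.two_le
  have hpi : Nat.primeCounting p = i + 1 := by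
    have h0 := Nat.primeCounting'_nth_eq i
    rw [Nat.primeCounting_eq_primeCounting'_succ]
    unfold Nat.primeCounting' at h0 ⊢
    rw [Nat.count_succ, ← hp] at *
    simp [h0, hpp]
  have hl : 0 < Real.log p := Real.log_pos (by linarith)
  have h1 := Chebyshev.pi_ge p
  rw [div_le_iff₀ hl, hpi] at h1
  push_cast at h1
  have h2 := hx0 (p + 1) (by
    have : (⌈x0⌉₊ : ℝ) ≤ p := by exact_mod_cast (by omega : ⌈x0⌉₊ ≤ p)
    linarith [Nat.le_ceil x0])
  have h3 : Real.log ((p : ℝ) + 1) ≤ 0.001 * ((p : ℝ) + 1) := by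
    rw [id, Real.norm_of_nonneg (by positivity : (0:ℝ) ≤ (p : ℝ) + 1)] at h2
    exact (le_abs_self _).trans h2
  have h4 := Real.log_two_gt_d9
  nlinarith

lemma prod_le (k0 : ℕ) (hk : ∀ i ≥ k0, 0.691 * (Nat.nth Nat.Prime i : ℝ) ≤
    ((i : ℝ) + 1) * Real.log (Nat.nth Nat.Prime i)) (n : ℕ) (hn : 8 ≤ n) (i j : ℕ)
    (hi : k0 ≤ i) (hj : k0 ≤ j)
    (hij : ((i : ℝ) + 1) * ((j : ℝ) + 1) ≤ (2 * 0.69) ^ 2 * n / (Real.log n) ^ 2) :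
    Nat.nth Nat.Prime i * Nat.nth Nat.Prime j ≤ n := by
  by_contra hcon
  have h1 := hk i hi
  have h2 := hk j hj
  have hx : (2 : ℝ) ≤ Nat.nth Nat.Prime i := by exact_mod_cast (Nat.prime_nth_prime i).two_le
  have hy : (2 : ℝ) ≤ Nat.nth Nat.Prime j := by exact_mod_cast (Nat.prime_nth_prime j).two_le
  have hc : (n : ℝ) < (Nat.nth Nat.Prime i : ℝ) * Nat.nth Nat.Prime j := by
    exact_mod_cast not_le.1 hcon
  set x : ℝ := ((Nat.nth Nat.Prime i : ℕ) : ℝ)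
  set y : ℝ := ((Nat.nth Nat.Prime j : ℕ) : ℝ)
  have hn' : (8 : ℝ) ≤ n := by exact_mod_cast hn
  have hlx : 0 < Real.log x := Real.log_pos (by linarith)
  have hly : 0 < Real.log y := Real.log_pos (by linarith)
  have hln : 0 < Real.log n := Real.log_pos (by linarith)
  have he : Real.exp 2 ≤ n := by
    have h := Real.exp_one_lt_d9
    have : Real.exp 2 = Real.exp 1 * Real.exp 1 := by rw [← Real.exp_add]; norm_num
    rw [this]
    nlinarith [Real.exp_pos 1]
  have hanti := Real.log_div_sqrt_antitoneOn (a := (n : ℝ)) (b := x * y) he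
    (he.trans hc.le) hc.le
  simp only at hanti
  have hsq : (Real.log (x * y)) ^ 2 / (x * y) ≤ (Real.log n) ^ 2 / n := by
    have h0 : 0 ≤ Real.log (x * y) / √(x * y) := div_nonneg (Real.log_nonneg (by nlinarith)) (by positivity)
    have := pow_le_pow_left₀ h0 hanti 2
    rwa [div_pow, div_pow, Real.sq_sqrt (by positivity), Real.sq_sqrt (by positivity)] at this
  have hlog : Real.log (x * y) = Real.log x + Real.log y := Real.log_mul (by linarith) (by linarith)
  rw [div_le_div_iff₀ (by positivity) (by positivity)] at hsq
  rw [le_div_iff₀ (by positivity)] at hij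
  set I : ℝ := (i : ℝ) + 1
  set J : ℝ := (j : ℝ) + 1
  have hI : 0 < I := by positivity
  have hJ : 0 < J := by positivity
  have g1 : (0.691 * x) * (0.691 * y) ≤ (I * Real.log x) * (J * Real.log y) :=
    mul_le_mul h1 h2 (by positivity) (by positivity)
  have g2 : 4 * (Real.log x * Real.log y) ≤ (Real.log (x * y)) ^ 2 := by
    rw [hlog]; nlinarith [sq_nonneg (Real.log x - Real.log y)]
  have g3 : 4 * 0.691 ^ 2 * (x * y) ≤ I * J * (Real.log (x * y)) ^ 2 := by
    have := mul_le_mul_of_nonneg_left g2 (by positivity : 0 ≤ I * J)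
    nlinarith
  have g4 : 4 * 0.691 ^ 2 * (x * y) * n ≤ (I * J * (Real.log n) ^ 2) * (x * y) := by
    have a1 := mul_le_mul_of_nonneg_right g3 (by positivity : (0:ℝ) ≤ n)
    have a2 := mul_le_mul_of_nonneg_left hsq (by positivity : 0 ≤ I * J)
    nlinarith
  have g5 := mul_le_mul_of_nonneg_right hij (by positivity : 0 ≤ x * y)
  have g6 : 0 < x * y * n := by positivity
  nlinarith

lemma log_bound (w : ℝ) (h1 : 1.56 ≤ w) (h2 : w ≤ 3.125) : 1.77 * w ≤ 1 + 4 * Real.log w := by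
  have e1 : (0.4403 : ℝ) ≤ Real.log 1.56 := by
    have h := Real.le_log_one_add_of_nonneg (x := 0.248) (by norm_num)
    have h' : 2 * Real.log (1 + 0.248) ≤ Real.log 1.56 := by
      have : (2 : ℝ) * Real.log (1 + 0.248) = Real.log ((1 + 0.248) ^ 2) := by
        rw [Real.log_pow]; norm_num
      rw [this]
      exact Real.log_le_log (by norm_num) (by norm_num)
    norm_num at h h' ⊢
    linarith
  have e2 : (1.1329 : ℝ) ≤ Real.log 3.125 := by
    have h := Real.le_log_one_add_of_nonneg (x := 0.25) (by norm_num)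
    have h' : Real.log 2 + 2 * Real.log (1 + 0.25) = Real.log 3.125 := by
      have : (2 : ℝ) * Real.log (1 + 0.25) = Real.log ((1 + 0.25) ^ 2) := by
        rw [Real.log_pow]; norm_num
      rw [this, ← Real.log_mul (by norm_num) (by norm_num)]
      norm_num
    have h3 := Real.log_two_gt_d9
    rw [← h']
    norm_num at h h3 ⊢
    linarith
  have hc := strictConcaveOn_log_Ioi.concaveOn
  have m1 : (1.56 : ℝ) ∈ Set.Ioi (0 : ℝ) := by rw [Set.mem_Ioi]; norm_num
  have m2 : (3.125 : ℝ) ∈ Set.Ioi (0 : ℝ) := by rw [Set.mem_Ioi]; norm_num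
  have p1 : (0 : ℝ) ≤ (3.125 - w) / 1.565 := div_nonneg (by linarith) (by norm_num)
  have p2 : (0 : ℝ) ≤ (w - 1.56) / 1.565 := div_nonneg (by linarith) (by norm_num)
  have p3 : (3.125 - w) / 1.565 + (w - 1.56) / 1.565 = 1 := by
    rw [← add_div, div_eq_one_iff_eq (by norm_num)]; ring
  have h3 := hc.2 m1 m2 p1 p2 p3
  simp only [smul_eq_mul] at h3
  have e : (3.125 - w) / 1.565 * 1.56 + (w - 1.56) / 1.565 * 3.125 = w := by field_simp; ring
  rw [e] at h3
  have g1 := mul_le_mul_of_nonneg_left e1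
    (div_nonneg (by linarith) (by norm_num) : (0 : ℝ) ≤ (3.125 - w) / 1.565)
  have g2 := mul_le_mul_of_nonneg_left e2
    (div_nonneg (by linarith) (by norm_num) : (0 : ℝ) ≤ (w - 1.56) / 1.565)
  have g3 : (1.77 * w - 1) / 4 ≤ (3.125 - w) / 1.565 * 0.4403 + (w - 1.56) / 1.565 * 1.1329 := by
    have : (3.125 - w) / 1.565 * 0.4403 + (w - 1.56) / 1.565 * 1.1329 - (1.77 * w - 1) / 4 =
      ((3.125 - w) * 0.4403 + (w - 1.56) * 1.1329 - (1.77 * w - 1) / 4 * 1.565) / 1.565 := by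
      field_simp
    have h0 : 0 ≤ ((3.125 - w) * 0.4403 + (w - 1.56) * 1.1329 - (1.77 * w - 1) / 4 * 1.565) / 1.565 := by
      apply div_nonneg _ (by norm_num)
      nlinarith
    linarith
  linarith

lemma core (k0 : ℕ) (hk : ∀ i ≥ k0, 0.691 * (Nat.nth Nat.Prime i : ℝ) ≤
    ((i : ℝ) + 1) * Real.log (Nat.nth Nat.Prime i)) (n : ℕ) (hn : 8 ≤ n) (r : ℝ)
    (hr4 : r ^ 4 = n / (Real.log n) ^ 2) (hr2 : r ^ 2 * Real.log n = √n) (hR : 400 ≤ r)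
    (hR2 : 500 * ((k0 : ℝ) + 2) ≤ r ^ 2) (hn6 : 21 * √n ≤ (n : ℝ) ^ ((2 : ℝ) / 3)) :
    ∃ E : ℕ, √2 * r ^ 3 ≤ E ∧ T n * 2 ^ E ≤ S n := by
  have hn' : (8 : ℝ) ≤ n := by exact_mod_cast hn
  have hln : 0 < Real.log n := Real.log_pos (by linarith)
  obtain ⟨s, hs⟩ : ∃ s : ℝ, s = 1.174 * r := ⟨_, rfl⟩
  have hs0 : 400 ≤ s := by rw [hs]; linarith
  obtain ⟨q, hq, hq1, hq2⟩ := Nat.exists_prime_lt_and_le_two_mul ⌈1.56 * s⌉₊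
    (by
      have : 0 < ⌈1.56 * s⌉₊ := Nat.ceil_pos.2 (by linarith)
      omega)
  have : Fact q.Prime := ⟨hq⟩
  have hq1' : 1.56 * s ≤ q := (Nat.le_ceil _).trans (by exact_mod_cast hq1.le)
  have hq2' : (q : ℝ) ≤ 3.125 * s := by
    have h1 : (q : ℝ) ≤ 2 * (⌈1.56 * s⌉₊ : ℝ) := by exact_mod_cast hq2
    have h2 := Nat.ceil_lt_add_one (by linarith : 0 ≤ 1.56 * s)
    linarith
  obtain ⟨w, hw⟩ : ∃ w : ℝ, w = q / s := ⟨_, rfl⟩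
  have hqw : (q : ℝ) = w * s := by rw [hw]; field_simp
  have hw1 : 1.56 ≤ w := by rw [hw, le_div_iff₀ (by linarith)]; exact hq1'
  have hw2 : w ≤ 3.125 := by rw [hw, div_le_iff₀ (by linarith)]; exact hq2'
  have hM : 0 < s ^ 4 := by positivity
  have hMQ : s ^ 4 ≤ ((q ^ 2 : ℕ) : ℝ) ^ 2 := by
    push_cast
    rw [← pow_mul]
    exact pow_le_pow_left₀ (by linarith) (by linarith) 4
  have hcnt := count_pairs (q ^ 2) k0 (s ^ 4) hM hMQ
  have hlog : Real.log (((q ^ 2 : ℕ) : ℝ) ^ 2 / s ^ 4) = 4 * Real.log w := by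
    have : ((q ^ 2 : ℕ) : ℝ) ^ 2 / s ^ 4 = w ^ 4 := by
      push_cast; rw [hqw]; field_simp
    rw [this, Real.log_pow]; norm_num
  rw [hlog] at hcnt
  have hlb := log_bound w hw1 hw2
  set D := (Finset.range (q ^ 2) ×ˢ Finset.range (q ^ 2)).filter (fun e : ℕ × ℕ =>
        k0 ≤ e.1 ∧ e.1 < e.2 ∧ ((e.1 : ℝ) + 1) * ((e.2 : ℝ) + 1) ≤ s ^ 4) with hD
  have hDm : ∀ e ∈ D, (e.1 < q ^ 2 ∧ e.2 < q ^ 2) ∧ k0 ≤ e.1 ∧ e.1 < e.2 ∧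
      ((e.1 : ℝ) + 1) * ((e.2 : ℝ) + 1) ≤ s ^ 4 := by
    intro e he
    simpa only [hD, Finset.mem_filter, Finset.mem_product, Finset.mem_range] using he
  have hinj : Function.Injective (Nat.nth Nat.Prime) :=
    (Nat.nth_strictMono Nat.infinite_setOfPred_prime).injective
  obtain ⟨D', hsub, hcard, hsid, hcard2⟩ := graph_exists q (Nat.nth Nat.Prime)
    Nat.prime_nth_prime hinj D (fun e he => ⟨(hDm e he).2.2.1, (hDm e he).1.2⟩)
  have hprod : ∀ e ∈ D, Nat.nth Nat.Prime e.1 * Nat.nth Nat.Prime e.2 ≤ n := by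
    intro e he
    obtain ⟨-, h1, h2, h3⟩ := hDm e he
    refine prod_le k0 hk n hn e.1 e.2 h1 (by omega) (h3.trans ?_)
    rw [mul_div_assoc, ← hr4, hs, mul_pow]
    apply mul_le_mul_of_nonneg_right (by norm_num) (by positivity)
  have hbig : ∀ i j, (i, j) ∈ D → (Nat.nth Nat.Prime j : ℝ) ≤ (n : ℝ) ^ ((2 : ℝ) / 3) := by
    intro i j he
    obtain ⟨⟨-, h0⟩, h1, h2, -⟩ := hDm _ he
    have h3 := hprod _ he
    simp only at h0 h1 h2 h3
    have h4 := hk j (by omega)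
    have h5 := (Nat.prime_nth_prime i).pos
    have h6 := (Nat.prime_nth_prime j).pos
    have h7 : Nat.nth Nat.Prime j ≤ n := le_trans (Nat.le_mul_of_pos_left _ h5) h3
    have h8 : Real.log (Nat.nth Nat.Prime j) ≤ Real.log n :=
      Real.log_le_log (by exact_mod_cast h6) (by exact_mod_cast h7)
    have h9 : (j : ℝ) + 1 ≤ (q : ℝ) ^ 2 := by exact_mod_cast h0
    have h10 : (q : ℝ) ^ 2 ≤ 14 * r ^ 2 := by
      have := pow_le_pow_left₀ (by positivity) hq2' 2
      rw [hs] at this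
      nlinarith [sq_nonneg r]
    have h11 : ((j : ℝ) + 1) * Real.log (Nat.nth Nat.Prime j) ≤ 14 * r ^ 2 * Real.log n :=
      mul_le_mul (h9.trans h10) h8 (Real.log_nonneg (by exact_mod_cast h6)) (by positivity)
    have h12 : 0 ≤ √(n : ℝ) := Real.sqrt_nonneg _
    nlinarith
  refine ⟨D'.card, ?_, ?_⟩
  · have hc' : (D.card : ℝ) ≤ q * D'.card := by exact_mod_cast hcard
    have g1 : s ^ 4 * (1.77 * w) ≤ s ^ 4 * (1 + 4 * Real.log w) :=
      mul_le_mul_of_nonneg_left hlb hM.le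
    have g2 : s ^ 4 * (1.77 * w) - (4 + 2 * k0) * (w * s) ^ 2 ≤ 2 * (w * s * D'.card) := by
      rw [← hqw]
      push_cast at hcnt
      linarith
    have hws : 0 < w * s := by positivity
    have g3 : 0.885 * s ^ 3 - (2 + k0) * (w * s) ≤ D'.card := by
      have : (w * s) * (0.885 * s ^ 3 - (2 + k0) * (w * s)) ≤ (w * s) * D'.card := by
        linarith
      exact le_of_mul_le_mul_left this hws
    have g4 : (2 + (k0 : ℝ)) * (w * s) ≤ 0.0075 * r ^ 3 := by
      have a1 : w * s ≤ 3.67 * r := by rw [← hqw]; linarith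
      have a2 : (2 + (k0 : ℝ)) ≤ r ^ 2 / 500 := by linarith
      calc _ ≤ r ^ 2 / 500 * (3.67 * r) := mul_le_mul a2 a1 hws.le (by positivity)
        _ = 3.67 / 500 * r ^ 3 := by ring
        _ ≤ _ := mul_le_mul_of_nonneg_right (by norm_num) (by positivity)
    have g5 : √2 ≤ 1.4143 := by
      rw [Real.sqrt_le_left (by norm_num)]; norm_num
    have g6 : √2 * r ^ 3 ≤ 1.4143 * r ^ 3 := mul_le_mul_of_nonneg_right g5 (by positivity)
    have g7 : s ^ 3 = 1.174 ^ 3 * r ^ 3 := by rw [hs, mul_pow]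
    have g8 : 0 < r ^ 3 := by positivity
    nlinarith
  · rw [← hcard2]
    apply ms_count n _ _ _ _ _ hsid
    · intro p hp
      rw [Finset.mem_filter] at hp
      obtain ⟨-, hp1, hp2⟩ := hp
      refine ⟨hp1, ?_⟩
      have h1 : √(n : ℝ) < p := by
        have := Real.sqrt_nonneg (n : ℝ)
        linarith
      have h2 : (n : ℝ) < p * p := by
        rw [← Real.mul_self_sqrt (by positivity : (0 : ℝ) ≤ n)]
        exact mul_self_lt_mul_self (Real.sqrt_nonneg _) h1
      exact_mod_cast h2
    · intro x hx
      obtain ⟨e, he, rfl⟩ := Finset.mem_image.1 hx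
      rw [Finset.mem_Icc]
      exact ⟨Nat.mul_pos (Nat.prime_nth_prime _).pos (Nat.prime_nth_prime _).pos,
        hprod e (hsub he)⟩
    · intro x hx p hp hdvd
      obtain ⟨⟨i, j⟩, he, rfl⟩ := Finset.mem_image.1 hx
      rw [Finset.mem_filter] at hp
      obtain ⟨-, hp1, hp2⟩ := hp
      have hb := hbig i j (hsub he)
      have hij : Nat.nth Nat.Prime i < Nat.nth Nat.Prime j :=
        Nat.nth_strictMono Nat.infinite_setOfPred_prime (hDm _ (hsub he)).2.2.1
      have hij' : (Nat.nth Nat.Prime i : ℝ) < Nat.nth Nat.Prime j := by exact_mod_cast hij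
      rcases hp1.dvd_mul.1 hdvd with h | h
      · rw [(Nat.prime_dvd_prime_iff_eq hp1 (Nat.prime_nth_prime _)).1 h] at hp2
        simp only at hp2
        linarith
      · rw [(Nat.prime_dvd_prime_iff_eq hp1 (Nat.prime_nth_prime _)).1 h] at hp2
        simp only at hp2
        linarith

theorem count_mulSidon_lower :
    ∀ ε : ℝ, 0 < ε → ∃ N : ℕ, ∀ n : ℕ, N ≤ n →
      (T n : ℝ) *
        2 ^ ((Real.sqrt 2 - ε) * (n : ℝ) ^ ((3 : ℝ)/4) / (Real.log n) ^ ((3 : ℝ)/2))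
      ≤ (S n : ℝ) := by
  intro ε hε
  obtain ⟨k0, hk⟩ := cheb_nth
  have hev : ∀ᶠ x : ℝ in Filter.atTop, ‖Real.log x‖ ≤ 1 * ‖x ^ ((1 : ℝ) / 4)‖ :=
    (isLittleO_log_rpow_atTop (by norm_num)).bound (by norm_num)
  have hev2 : ∀ᶠ x : ℝ in Filter.atTop, 400 + 500 * ((k0 : ℝ) + 2) ≤ x ^ ((1 : ℝ) / 8) :=
    (tendsto_rpow_atTop (by norm_num)).eventually_ge_atTop _
  have hev3 : ∀ᶠ x : ℝ in Filter.atTop, 21 ≤ x ^ ((1 : ℝ) / 6) :=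
    (tendsto_rpow_atTop (by norm_num)).eventually_ge_atTop _
  have hall := tendsto_natCast_atTop_atTop.eventually (hev.and (hev2.and hev3))
  obtain ⟨N, hN⟩ := Filter.eventually_atTop.1 hall
  refine ⟨max N 8, fun n hn => ?_⟩
  obtain ⟨c1, c2, c3⟩ := hN n (le_trans (le_max_left _ _) hn)
  have hn8 : 8 ≤ n := le_trans (le_max_right _ _) hn
  have hn' : (8 : ℝ) ≤ n := by exact_mod_cast hn8
  have hn0 : (0 : ℝ) < n := by linarith
  have hln : 0 < Real.log n := Real.log_pos (by linarith)
  rw [Real.norm_of_nonneg hln.le, Real.norm_of_nonneg (by positivity), one_mul] at c1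
  obtain ⟨r, hr⟩ : ∃ r : ℝ, r = (n : ℝ) ^ ((1 : ℝ) / 4) / (Real.log n) ^ ((1 : ℝ) / 2) := ⟨_, rfl⟩
  have hrk : ∀ k : ℕ, r ^ k = (n : ℝ) ^ ((k : ℝ) / 4) / (Real.log n) ^ ((k : ℝ) / 2) := by
    intro k
    rw [hr, div_pow, ← Real.rpow_natCast, ← Real.rpow_natCast, ← Real.rpow_mul hn0.le,
      ← Real.rpow_mul hln.le]
    congr 2 <;> ring
  have hr8 : (n : ℝ) ^ ((1 : ℝ) / 8) ≤ r := by
    rw [hr, le_div_iff₀ (by positivity)]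
    calc (n : ℝ) ^ ((1 : ℝ) / 8) * (Real.log n) ^ ((1 : ℝ) / 2)
        ≤ (n : ℝ) ^ ((1 : ℝ) / 8) * ((n : ℝ) ^ ((1 : ℝ) / 4)) ^ ((1 : ℝ) / 2) := by
          gcongr
      _ = (n : ℝ) ^ ((1 : ℝ) / 4) := by
          rw [← Real.rpow_mul hn0.le, ← Real.rpow_add hn0]; norm_num
  have hk0 : (0 : ℝ) ≤ k0 := by positivity
  obtain ⟨E, hE1, hE2⟩ := core k0 hk n hn8 r
    (by
      rw [hrk 4]; norm_num)
    (by
      rw [hrk 2, Real.sqrt_eq_rpow]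
      norm_num
      field_simp)
    (by linarith)
    (by nlinarith)
    (by
      have : (n : ℝ) ^ ((2 : ℝ) / 3) = (n : ℝ) ^ ((1 : ℝ) / 6) * √n := by
        rw [Real.sqrt_eq_rpow, ← Real.rpow_add hn0]; norm_num
      rw [this]
      exact mul_le_mul_of_nonneg_right c3 (Real.sqrt_nonneg _))
  have hE3 : (T n : ℝ) * 2 ^ E ≤ S n := by exact_mod_cast hE2
  refine le_trans (mul_le_mul_of_nonneg_left ?_ (by positivity)) hE3
  rw [← Real.rpow_natCast]
  apply Real.rpow_le_rpow_of_exponent_le (by norm_num)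
  rw [mul_div_assoc]
  have h3 := hrk 3
  norm_num at h3
  rw [← h3]
  have : 0 ≤ r ^ 3 := by rw [hrk 3]; positivity
  nlinarith
end
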